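/- arXiv:0705.3340 — 7 statements merged into one kernel-verified Lean document; each statement's English description precedes it below -/
import Mathlib

section
/- Let m ≥ 1 and N ≥ 1 be natural numbers, let ρ ∈ ℂ, and let u : ℝ^m \ {0} → ℂ be a smooth function satisfying S_ρ^N u = 0 on ℝ^m \ {0}. Then for every x ∈ ℝ^m \ {0} and every r > 0 one has u(r·x) = r^{-ρ} · Σ_{k=0}^{N-1} ((log r)^k / k!) · (S_ρ^k u)(x). -/
/-- The scaling operator `S_ρ` acting on functions on `ℝ^m`:
`(S_ρ u)(x) = Σ_i x_i ∂_i u(x) + ρ u(x)`. -/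
noncomputable def scalingOp (m : ℕ) (ρ : ℂ) (u : (Fin m → ℝ) → ℂ) : (Fin m → ℝ) → ℂ :=
  fun x => (∑ i : Fin m, (x i : ℂ) * fderiv ℝ u x (Pi.single i (1 : ℝ))) + ρ * u x

/-!
In the logarithmic coordinate `t = log r` along the ray through `x`, the function
`v t = exp (ρ t) u (exp t x)` satisfies `v' t = exp (ρ t) (S_ρ u) (exp t x)`. Hence `S_ρ ^ N u = 0`
makes the `N`-th derivative of `v` vanish, so `v` equals its Taylor polynomial of degree `< N` at
`t = 0`, whose coefficients are the values `(S_ρ ^ k u) x / k!`; and `v (log r) = r ^ ρ u (r x)`.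
-/

open scoped ContDiff Nat

theorem eq_sum_iteratedDeriv_of_iteratedDeriv_eq_zero {E : Type*} [NormedAddCommGroup E]
    [NormedSpace ℝ E] {f : ℝ → E} {N : ℕ} (hf : ContDiff ℝ N f)
    (hzero : ∀ t, iteratedDeriv N f t = 0) (x₀ x : ℝ) :
    f x = ∑ k ∈ Finset.range N, ((k ! : ℝ)⁻¹ * (x - x₀) ^ k) • iteratedDeriv k f x₀ := by
  cases N with
  | zero => simpa using hzero x
  | succ n =>
    -- The value at `x` of the degree-`n` Taylor polynomial does not depend on its base point `t`.
    have hderiv (t : ℝ) : HasDerivAt (fun t ↦ taylorWithinEval f n Set.univ t x) 0 t := by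
      have hdiff : DifferentiableAt ℝ (iteratedDerivWithin n f Set.univ) t := by
        rw [iteratedDerivWithin_univ]
        exact hf.differentiable_iteratedDeriv n (by exact_mod_cast n.lt_succ_self) t
      have htaylor := hasDerivWithinAt_taylorWithinEval (x := x) uniqueDiffOn_univ
        Filter.univ_mem (Set.mem_univ t) subset_rfl
        (hf.of_le (by exact_mod_cast n.le_succ)).contDiffOn hdiff.differentiableWithinAt
      rwa [iteratedDerivWithin_univ, hzero, smul_zero, hasDerivWithinAt_univ] at htaylor
    calc
      f x = taylorWithinEval f n Set.univ x x := (taylorWithinEval_self f n Set.univ x).symm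
      _ = taylorWithinEval f n Set.univ x₀ x :=
        is_const_of_deriv_eq_zero (fun t ↦ (hderiv t).differentiableAt)
          (fun t ↦ (hderiv t).deriv) x x₀
      _ = _ := by simp only [taylor_within_apply, iteratedDerivWithin_univ]

section Ray

variable {E F : Type*} [NormedAddCommGroup E] [NormedSpace ℝ E] [NormedAddCommGroup F]
  [NormedSpace ℂ F]

/-- The Euler operator shifted by `ρ`: the coordinate-free form of `S_ρ`, with the Euler vector
field acting as `x ↦ fderiv ℝ u x x`. -/
noncomputable def eulerOp (ρ : ℂ) (u : E → F) : E → F :=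
  fun x ↦ fderiv ℝ u x x + ρ • u x

/-- The restriction of `u` to the ray through `x`, in the logarithmic coordinate `t = log r` and
weighted by `r ^ ρ`, so that it is constant when `u` is homogeneous of degree `-ρ`. -/
noncomputable def logRay (ρ : ℂ) (u : E → F) (x : E) : ℝ → F :=
  fun t ↦ Complex.exp (ρ * t) • u (Real.exp t • x)

variable {ρ : ℂ} {u : E → F} {x : E} {Ω : Set E}

theorem contDiffOn_eulerOp {n : ℕ∞ω} (hΩ : IsOpen Ω) (hu : ContDiffOn ℝ (n + 1) u Ω) :
    ContDiffOn ℝ n (eulerOp ρ u) Ω :=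
  ((hu.fderiv_of_isOpen hΩ le_rfl).clm_apply contDiffOn_id).add
    ((hu.of_le le_self_add).const_smul ρ)

theorem logRay_zero : logRay ρ u x 0 = u x := by
  simp [logRay]

theorem logRay_log {r : ℝ} (hr : 0 < r) : logRay ρ u x (Real.log r) = (r : ℂ) ^ ρ • u (r • x) := by
  rw [logRay, Real.exp_log hr, Complex.ofReal_log hr.le, mul_comm,
    Complex.cpow_def_of_ne_zero (Complex.ofReal_ne_zero.mpr hr.ne')]

theorem contDiff_logRay {n : ℕ∞ω} (hu : ContDiffOn ℝ n u Ω)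
    (hray : ∀ r : ℝ, 0 < r → r • x ∈ Ω) : ContDiff ℝ n (logRay ρ u x) := by
  have hweight : ContDiff ℝ n fun t : ℝ ↦ Complex.exp (ρ * t) :=
    (contDiff_const.mul Complex.ofRealCLM.contDiff).cexp
  have hpoint : ContDiff ℝ n fun t : ℝ ↦ Real.exp t • x := Real.contDiff_exp.smul contDiff_const
  exact hweight.smul (hu.comp_contDiff hpoint fun t ↦ hray _ t.exp_pos)

theorem hasDerivAt_logRay {t : ℝ} (hu : DifferentiableAt ℝ u (Real.exp t • x)) :
    HasDerivAt (logRay ρ u x) (logRay ρ (eulerOp ρ u) x t) t := by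
  have hweight : HasDerivAt (fun t : ℝ ↦ Complex.exp (ρ * t)) (Complex.exp (ρ * t) * ρ) t := by
    simpa using ((hasDerivAt_id t).ofReal_comp.const_mul ρ).cexp
  have hpoint : HasDerivAt (fun t : ℝ ↦ Real.exp t • x) (Real.exp t • x) t :=
    (Real.hasDerivAt_exp t).smul_const x
  refine (hweight.smul (hu.hasFDerivAt.comp_hasDerivAt t hpoint)).congr_deriv ?_
  simp only [logRay, eulerOp, smul_add, mul_smul, Function.comp_apply]

theorem iteratedDeriv_logRay {k : ℕ} (hΩ : IsOpen Ω) (hu : ContDiffOn ℝ k u Ω)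
    (hray : ∀ r : ℝ, 0 < r → r • x ∈ Ω) :
    iteratedDeriv k (logRay ρ u x) = logRay ρ ((eulerOp ρ)^[k] u) x := by
  induction k generalizing u with
  | zero => simp
  | succ k ih =>
    have hu_succ : ContDiffOn ℝ (k + 1) u Ω := by exact_mod_cast hu
    have hderiv : deriv (logRay ρ u x) = logRay ρ (eulerOp ρ u) x := by
      funext t
      exact (hasDerivAt_logRay <| (hu_succ.differentiableOn (by simp)).differentiableAt
        (hΩ.mem_nhds (hray _ t.exp_pos))).deriv
    rw [iteratedDeriv_succ', hderiv, ih (contDiffOn_eulerOp hΩ hu_succ),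
      Function.iterate_succ_apply]

theorem almost_homogeneous_representation_general {N : ℕ} (hΩ : IsOpen Ω)
    (hu : ContDiffOn ℝ N u Ω) (hray : ∀ r : ℝ, 0 < r → r • x ∈ Ω)
    (hscale : ∀ r : ℝ, 0 < r → (eulerOp ρ)^[N] u (r • x) = 0) {r : ℝ} (hr : 0 < r) :
    u (r • x) = (r : ℂ) ^ (-ρ) •
      ∑ k ∈ Finset.range N, ((Real.log r : ℂ) ^ k / (k ! : ℂ)) • (eulerOp ρ)^[k] u x := by
  have hderiv (k : ℕ) (hk : k ≤ N) :
      iteratedDeriv k (logRay ρ u x) = logRay ρ ((eulerOp ρ)^[k] u) x :=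
    iteratedDeriv_logRay hΩ (hu.of_le (by exact_mod_cast hk)) hray
  have hzero (t : ℝ) : iteratedDeriv N (logRay ρ u x) t = 0 := by
    rw [hderiv N le_rfl, logRay, hscale _ t.exp_pos, smul_zero]
  have htaylor : (r : ℂ) ^ ρ • u (r • x) =
      ∑ k ∈ Finset.range N, ((Real.log r : ℂ) ^ k / (k ! : ℂ)) • (eulerOp ρ)^[k] u x := by
    rw [← logRay_log hr, eq_sum_iteratedDeriv_of_iteratedDeriv_eq_zero
      (contDiff_logRay hu hray) hzero 0 (Real.log r)]
    refine Finset.sum_congr rfl fun k hk ↦ ?_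
    rw [hderiv k (Finset.mem_range.mp hk).le, logRay_zero, ← Complex.coe_smul, sub_zero]
    push_cast
    rw [inv_mul_eq_div]
  have hr_ne : (r : ℂ) ≠ 0 := Complex.ofReal_ne_zero.mpr hr.ne'
  rw [← htaylor, smul_smul, ← Complex.cpow_add _ _ hr_ne, neg_add_cancel, Complex.cpow_zero,
    one_smul]

end Ray

theorem scalingOp_eq_eulerOp (m : ℕ) (ρ : ℂ) : scalingOp m ρ = eulerOp ρ := by
  funext u x
  have hbasis : fderiv ℝ u x x = ∑ i, (x i : ℂ) * fderiv ℝ u x (Pi.single i 1) :=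
    (congrArg (fderiv ℝ u x) (pi_eq_sum_univ' x)).trans (by
      simp only [map_sum, map_smul, Complex.real_smul])
  rw [scalingOp, eulerOp, hbasis, smul_eq_mul]

/-- representation formula for almost homogeneously scaling smooth
functions on `ℝ^m \ {0}`. -/
theorem almost_homogeneous_representation
    (m N : ℕ) (hm : 1 ≤ m) (hN : 1 ≤ N) (ρ : ℂ)
    (u : (Fin m → ℝ) → ℂ)
    (hu : ContDiffOn ℝ (⊤ : ℕ∞) u {x : Fin m → ℝ | x ≠ 0})
    (hscale : ∀ x : Fin m → ℝ, x ≠ 0 → ((scalingOp m ρ)^[N] u) x = 0) :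
    ∀ x : Fin m → ℝ, x ≠ 0 → ∀ r : ℝ, 0 < r →
      u (r • x) = (r : ℂ) ^ (-ρ) *
        ∑ k ∈ Finset.range N,
          ((Real.log r : ℂ)) ^ k / (Nat.factorial k : ℂ) * ((scalingOp m ρ)^[k] u) x := by
  intro x hx r hr
  have hray (s : ℝ) (hs : 0 < s) : s • x ≠ 0 := smul_ne_zero hs.ne' hx
  rw [scalingOp_eq_eulerOp] at hscale ⊢
  exact almost_homogeneous_representation_general isOpen_ne
    (hu.of_le (by exact_mod_cast le_top)) hray (fun s hs ↦ hscale _ (hray s hs)) hr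
end

section
/- Let m ≥ 1 and N ≥ 1 be natural numbers, let α = (α_1,…,α_m) ∈ ℕ^m be a multi-index, set ρ = m + |α|, and let u : ℝ^m \ {0} → ℂ be a smooth function with S_ρ^N u = 0 on ℝ^m \ {0}. Then the smooth vector field X(x) = x^α · (S_ρ^{N-1} u)(x) · x on ℝ^m \ {0} is divergence free: Σ_{i=1}^m ∂_i ( x_i · x^α · (S_ρ^{N-1} u)(x) ) = 0 for every x ∈ ℝ^m \ {0}. Equivalently, the (m-1)-form obtained by contracting the Euler vector field E = Σ x_i ∂_i into x^α (S_ρ^{N-1}u) dx^1∧…∧dx^m is closed on ℝ^m \ {0}. -/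
/-!
For every differentiable `f`, the divergence of `f(x) · x` is `S_m f`. If `p` is homogeneous of
degree `d`, Euler's identity turns the Leibniz rule into `S_ρ (p v) = p · S_{ρ + d} v`. Hence the
divergence of `p(x) v(x) · x` is `p · S_{m + d} v`, which for `v = S_{m + d}^{N-1} u` equals
`p · S_{m + d}^N u = 0`.
-/

open Topology

theorem fderiv_apply_self_of_homogeneous {E F : Type*}
    [NormedAddCommGroup E] [NormedSpace ℝ E] [NormedAddCommGroup F] [NormedSpace ℂ F]
    {f : E → F} {x : E} {d : ℂ} (hf : DifferentiableAt ℝ f x)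
    (hom : ∀ᶠ t : ℝ in 𝓝 1, f (t • x) = (t : ℂ) ^ d • f x) :
    fderiv ℝ f x x = d • f x := by
  have along_ray : HasDerivAt (fun t : ℝ => f (t • x)) (fderiv ℝ f x x) 1 := by
    have ray : HasDerivAt (fun t : ℝ => t • x) x 1 := by
      simpa using (hasDerivAt_id (1 : ℝ)).smul_const x
    exact HasFDerivAt.comp_hasDerivAt_of_eq 1 hf.hasFDerivAt ray (one_smul ℝ x).symm
  have power : HasDerivAt (fun t : ℝ => (t : ℂ) ^ d • f x) (d • f x) 1 := by
    have has_deriv_cpow : HasDerivAt (fun z : ℂ => z ^ d) d ((1 : ℝ) : ℂ) := by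
      simpa using (hasDerivAt_id (1 : ℂ)).cpow_const (c := d) (by simp)
    exact has_deriv_cpow.comp_ofReal.smul_const (f x)
  exact along_ray.unique (power.congr_of_eventuallyEq hom)

theorem prod_ofReal_pow_smul {ι : Type*} [Fintype ι] (α : ι → ℕ) (t : ℝ) (x : ι → ℝ) :
    ∏ j, (((t • x) j : ℝ) : ℂ) ^ α j =
      (t : ℂ) ^ (∑ j, (α j : ℂ)) * ∏ j, (x j : ℂ) ^ α j := by
  rw [← Nat.cast_sum, Complex.cpow_natCast, ← Finset.prod_pow_eq_pow_sum,
    ← Finset.prod_mul_distrib]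
  simp [mul_pow]

section ScalingOp

variable {m : ℕ} {ρ : ℂ} {u : (Fin m → ℝ) → ℂ} {x : Fin m → ℝ}

theorem scalingOp_apply_eq_fderiv (m : ℕ) (ρ : ℂ) (u : (Fin m → ℝ) → ℂ) (x : Fin m → ℝ) :
    scalingOp m ρ u x = fderiv ℝ u x x + ρ * u x := by
  have coord_expansion :
      fderiv ℝ u x x = ∑ i, (x i : ℂ) * fderiv ℝ u x (Pi.single i 1) := by
    conv_lhs => arg 2; rw [pi_eq_sum_univ' x]
    simp
  rw [scalingOp, coord_expansion]

theorem contDiffAt_scalingOp {n : WithTop ℕ∞} (hu : ContDiffAt ℝ (n + 1) u x) :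
    ContDiffAt ℝ n (scalingOp m ρ u) x := by
  have coordinate_free : scalingOp m ρ u = fun y => fderiv ℝ u y y + ρ * u y :=
    funext (scalingOp_apply_eq_fderiv m ρ u)
  rw [coordinate_free]
  exact ((hu.fderiv_right le_rfl).clm_apply contDiffAt_id).add
    (contDiffAt_const.mul (hu.of_le le_self_add))

theorem contDiffAt_iterate_scalingOp {n : WithTop ℕ∞} {k : ℕ}
    (hu : ContDiffAt ℝ (n + k) u x) : ContDiffAt ℝ n ((scalingOp m ρ)^[k] u) x := by
  induction k generalizing n with
  | zero => simpa using hu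
  | succ k ih =>
    rw [Function.iterate_succ_apply']
    refine contDiffAt_scalingOp (ih ?_)
    rwa [Nat.cast_succ, add_comm (k : WithTop ℕ∞), ← add_assoc] at hu

theorem sum_fderiv_coord_mul_eq_scalingOp {f : (Fin m → ℝ) → ℂ} (hf : DifferentiableAt ℝ f x) :
    ∑ i, fderiv ℝ (fun y : Fin m → ℝ => (y i : ℂ) * f y) x (Pi.single i 1) =
      scalingOp m m f x := by
  have partial_deriv (i : Fin m) :
      fderiv ℝ (fun y : Fin m → ℝ => (y i : ℂ) * f y) x (Pi.single i 1) =
        x i * fderiv ℝ f x (Pi.single i 1) + f x := by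
    have coord : HasFDerivAt (fun y : Fin m → ℝ => (y i : ℂ))
        (Complex.ofRealCLM.comp (ContinuousLinearMap.proj i)) x :=
      (Complex.ofRealCLM.comp
        (ContinuousLinearMap.proj (R := ℝ) (φ := fun _ : Fin m => ℝ) i)).hasFDerivAt
    rw [(coord.fun_mul hf.hasFDerivAt).fderiv]
    simp
  simp [partial_deriv, Finset.sum_add_distrib, scalingOp]

theorem scalingOp_mul_of_homogeneous {d : ℂ} {p v : (Fin m → ℝ) → ℂ}
    (hp : DifferentiableAt ℝ p x)
    (hom : ∀ᶠ t : ℝ in 𝓝 1, p (t • x) = (t : ℂ) ^ d * p x)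
    (hv : DifferentiableAt ℝ v x) :
    scalingOp m ρ (fun y => p y * v y) x = p x * scalingOp m (ρ + d) v x := by
  have euler : fderiv ℝ p x x = d * p x := fderiv_apply_self_of_homogeneous hp hom
  have leibniz : fderiv ℝ (fun y => p y * v y) x x =
      p x * fderiv ℝ v x x + v x * fderiv ℝ p x x := by
    simp [fderiv_fun_mul hp hv]
  rw [scalingOp_apply_eq_fderiv, scalingOp_apply_eq_fderiv, leibniz, euler]
  ring

theorem euler_contraction_closed_general {N : ℕ} (hN : 1 ≤ N) {d : ℂ}
    {p : (Fin m → ℝ) → ℂ} (hp : DifferentiableAt ℝ p x)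
    (hom : ∀ᶠ t : ℝ in 𝓝 1, p (t • x) = (t : ℂ) ^ d * p x)
    (hu : ContDiffAt ℝ N u x) (hscale : (scalingOp m (m + d))^[N] u x = 0) :
    ∑ i, fderiv ℝ
      (fun y : Fin m → ℝ => (y i : ℂ) * p y * (scalingOp m (m + d))^[N - 1] u y)
      x (Pi.single i 1) = 0 := by
  obtain ⟨k, rfl⟩ := Nat.exists_eq_add_of_le' hN
  rw [Function.iterate_succ_apply'] at hscale
  rw [Nat.add_sub_cancel]
  have hv : DifferentiableAt ℝ ((scalingOp m (m + d))^[k] u) x :=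
    (contDiffAt_iterate_scalingOp (n := 1) (by simpa [add_comm] using hu)).differentiableAt
      one_ne_zero
  simp only [mul_assoc]
  rw [sum_fderiv_coord_mul_eq_scalingOp (hp.fun_mul hv), scalingOp_mul_of_homogeneous hp hom hv,
    hscale, mul_zero]

end ScalingOp

/-- for `ρ = m + |α|` and `S_ρ^N u = 0` on `ℝ^m \ {0}`, the vector field
`X(x) = x^α (S_ρ^{N-1} u)(x) · x` is divergence free on `ℝ^m \ {0}`. -/
theorem euler_contraction_closed
    (m N : ℕ) (hm : 1 ≤ m) (hN : 1 ≤ N) (α : Fin m → ℕ)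
    (u : (Fin m → ℝ) → ℂ)
    (hu : ContDiffOn ℝ (⊤ : ℕ∞) u {x : Fin m → ℝ | x ≠ 0})
    (hscale : ∀ x : Fin m → ℝ, x ≠ 0 →
      ((scalingOp m ((m : ℂ) + ∑ j : Fin m, (α j : ℂ)))^[N] u) x = 0) :
    ∀ x : Fin m → ℝ, x ≠ 0 →
      ∑ i : Fin m,
        fderiv ℝ (fun y : Fin m → ℝ =>
            (y i : ℂ) * (∏ j : Fin m, (y j : ℂ) ^ (α j)) *
              ((scalingOp m ((m : ℂ) + ∑ j : Fin m, (α j : ℂ)))^[N - 1] u) y)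
          x (Pi.single i (1 : ℝ)) = 0 := by
  intro x hx
  have hux : ContDiffAt ℝ N u x :=
    (hu.contDiffAt (isOpen_ne.mem_nhds hx)).of_le (by exact_mod_cast le_top)
  exact euler_contraction_closed_general hN (by fun_prop)
    (.of_forall fun t => prod_ofReal_pow_smul α t x) hux (hscale x hx)
end

section
/- Let N ≥ 1, let s ∈ ℂ, and let h_0,…,h_{N-1} : (0,∞) → ℂ be continuous functions whose supports are contained in a compact subset of (0,∞). For a ∈ ℂ define I_k(a) = ∫_0^∞ r^{a+s} h_k(r) dr, where r^{z} = exp(z·log r). Then each I_k is an entire function of a, and (1/(N-1)!) times the (N-1)-st complex derivative, evaluated at a = 0, of the entire function a ↦ Σ_{k=0}^{N-1} a^{N-1-k} I_k(a) equals Σ_{k=0}^{N-1} ∫_0^∞ r^{s} ((log r)^k / k!) h_k(r) dr. (In other words, the residue at a = 0 of Σ_{k=0}^{N-1} a^{-(k+1)} I_k(a) equals Σ_{k=0}^{N-1} ∫_0^∞ r^{s} ((log r)^k / k!) h_k(r) dr.) -/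
open MeasureTheory

/-!
Up to a shift of the variable, `I_k` is the Mellin transform of `h_k`. Differentiating under the
integral sign gives `I_k^{(j)}(a) = ∫ r^{a+s} (log r)^j h_k(r) dr`; the logarithm is dominated by
a small shift of the exponent to either side. Multiplication by `a^m` moves the `k`-th Taylor
coefficient at `0` into degree `m + k`, so the coefficient of `a^{N-1}` in `∑_k a^{N-1-k} I_k(a)` is
`∑_k I_k^{(k)}(0) / k!`.
-/

open Set Filter Topology
open scoped Nat

section TaylorCoefficients

variable {𝕜 F : Type*} [NontriviallyNormedField 𝕜] [NormedAddCommGroup F] [NormedSpace 𝕜 F]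

theorem iteratedDeriv_pow_smul_zero {g : 𝕜 → F} (m k : ℕ) (hg : ContDiffAt 𝕜 (m + k : ℕ) g 0) :
    iteratedDeriv (m + k) (fun a ↦ a ^ m • g a) 0
      = ((m + k).descFactorial m : 𝕜) • iteratedDeriv k g 0 := by
  have leibniz : iteratedDeriv (m + k) (fun a ↦ a ^ m • g a) 0
      = ∑ i ∈ Finset.range (m + k + 1), (m + k).choose i •
          iteratedDeriv i (fun a : 𝕜 ↦ a ^ m) 0 • iteratedDeriv (m + k - i) g 0 := by
    have hpow : ContDiffAt 𝕜 (m + k : ℕ) (fun a : 𝕜 ↦ a ^ m) 0 := by fun_prop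
    simpa only [iteratedDerivWithin_univ] using!
      iteratedDerivWithin_smul (mem_univ 0) uniqueDiffOn_univ
        hpow.contDiffWithinAt hg.contDiffWithinAt
  rw [leibniz, Finset.sum_eq_single_of_mem m (Finset.mem_range.mpr (by lia))
    fun i _ hi ↦ by rw [iteratedDeriv_fun_pow_zero, if_neg hi, Nat.cast_zero, zero_smul, smul_zero],
    iteratedDeriv_fun_pow_zero, if_pos rfl, Nat.add_sub_cancel_left]
  simp [Nat.descFactorial_eq_factorial_mul_choose, mul_comm,
    mul_smul, ← Nat.cast_smul_eq_nsmul 𝕜]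

theorem one_div_factorial_smul_iteratedDeriv_pow_smul_zero [CharZero 𝕜] {g : 𝕜 → F} (m k : ℕ)
    (hg : ContDiffAt 𝕜 (m + k : ℕ) g 0) :
    (1 / (m + k)! : 𝕜) • iteratedDeriv (m + k) (fun a ↦ a ^ m • g a) 0
      = (1 / k ! : 𝕜) • iteratedDeriv k g 0 := by
  have hfact : (k ! * (m + k).descFactorial m : 𝕜) = (m + k)! := by
    exact_mod_cast (Nat.add_sub_cancel_left (n := m) (m := k)) ▸
      Nat.factorial_mul_descFactorial (Nat.le_add_right m k)
  have hcoeff : (1 / (m + k)! * (m + k).descFactorial m : 𝕜) = 1 / k ! := by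
    have hk : (k ! : 𝕜) ≠ 0 := Nat.cast_ne_zero.mpr k.factorial_ne_zero
    have hmk : ((m + k)! : 𝕜) ≠ 0 := Nat.cast_ne_zero.mpr (m + k).factorial_ne_zero
    field_simp
    linear_combination hfact
  rw [iteratedDeriv_pow_smul_zero m k hg, smul_smul, hcoeff]

theorem one_div_factorial_smul_iteratedDeriv_sum_pow_smul_zero [CharZero 𝕜] {n : ℕ}
    {I : Finset ℕ} (hI : ∀ k ∈ I, k ≤ n) {g : ℕ → 𝕜 → F} (hg : ∀ k ∈ I, ContDiffAt 𝕜 n (g k) 0) :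
    (1 / n ! : 𝕜) • iteratedDeriv n (fun a ↦ ∑ k ∈ I, a ^ (n - k) • g k a) 0
      = ∑ k ∈ I, (1 / k ! : 𝕜) • iteratedDeriv k (g k) 0 := by
  have hsummand : ∀ k ∈ I, ContDiffAt 𝕜 n (fun a ↦ a ^ (n - k) • g k a) 0 := fun k hk ↦
    (contDiffAt_id.pow _).smul (hg k hk)
  rw [iteratedDeriv_fun_sum hsummand, Finset.smul_sum]
  refine Finset.sum_congr rfl fun k hk ↦ ?_
  obtain ⟨m, rfl⟩ := Nat.exists_eq_add_of_le' (hI k hk)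
  simpa only [Nat.add_sub_cancel] using!
    one_div_factorial_smul_iteratedDeriv_pow_smul_zero m k (hg k hk)

end TaylorCoefficients

section Mellin

variable {E : Type*} [NormedAddCommGroup E] [NormedSpace ℂ E]

theorem rpow_mul_abs_log_le {t δ σ τ : ℝ} (ht : 0 < t) (hδ : 0 < δ) (hτ : |τ - σ| ≤ δ) :
    t ^ τ * |Real.log t| ≤ δ⁻¹ * (t ^ (σ + 2 * δ) + t ^ (σ - 2 * δ)) := by
  set x := Real.log t with hx
  have hlog : |x| ≤ δ⁻¹ * Real.exp (δ * |x|) := by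
    rw [le_inv_mul_iff₀ hδ]
    linarith [Real.add_one_le_exp (δ * |x|)]
  have hexponent : x * τ ≤ x * σ + δ * |x| := by
    have : x * (τ - σ) ≤ |x| * δ := (le_abs_self _).trans <| by rw [abs_mul]; gcongr
    linarith
  calc t ^ τ * |x|
      ≤ Real.exp (x * σ + δ * |x|) * (δ⁻¹ * Real.exp (δ * |x|)) := by
        rw [Real.rpow_def_of_pos ht]; gcongr
    _ = δ⁻¹ * (Real.exp (x * σ) * Real.exp |2 * δ * x|) := by
        rw [abs_mul, abs_of_pos (by positivity : 0 < 2 * δ), mul_left_comm, ← Real.exp_add,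
          ← Real.exp_add]
        ring_nf
    _ ≤ δ⁻¹ * (Real.exp (x * σ) * (Real.exp (2 * δ * x) + Real.exp (-(2 * δ * x)))) := by
        gcongr; exact Real.exp_abs_le _
    _ = δ⁻¹ * (t ^ (σ + 2 * δ) + t ^ (σ - 2 * δ)) := by
        rw [Real.rpow_def_of_pos ht, Real.rpow_def_of_pos ht, ← hx, mul_add, ← Real.exp_add,
          ← Real.exp_add]
        ring_nf

theorem norm_cpow_sub_one_smul_log_smul_le {t δ : ℝ} {s z : ℂ} (ht : 0 < t) (hδ : 0 < δ)
    (hz : ‖z - s‖ ≤ δ) (v : E) :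
    ‖(t : ℂ) ^ (z - 1) • Real.log t • v‖
      ≤ δ⁻¹ * (‖(t : ℂ) ^ (s + (2 * δ : ℝ) - 1) • v‖ + ‖(t : ℂ) ^ (s - (2 * δ : ℝ) - 1) • v‖) := by
  have hre : |(z.re - 1) - (s.re - 1)| ≤ δ := by
    simpa using (Complex.abs_re_le_norm (z - s)).trans hz
  have hbound := mul_le_mul_of_nonneg_right (rpow_mul_abs_log_le ht hδ hre) (norm_nonneg v)
  simp only [norm_smul, Complex.norm_cpow_eq_rpow_re_of_pos ht, Complex.sub_re, Complex.add_re,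
    Complex.ofReal_re, Complex.one_re, Real.norm_eq_abs, add_sub_right_comm, sub_right_comm]
  linarith

theorem hasDerivAt_cpow_sub_one_smul {t : ℝ} (ht : 0 < t) (z : ℂ) (v : E) :
    HasDerivAt (fun z : ℂ ↦ (t : ℂ) ^ (z - 1) • v) ((t : ℂ) ^ (z - 1) • Real.log t • v) z := by
  have hpow : HasDerivAt (fun z : ℂ ↦ (t : ℂ) ^ (z - 1)) ((t : ℂ) ^ (z - 1) * Real.log t) z := by
    simpa [Complex.ofReal_log ht.le] using ((hasDerivAt_id z).sub_const 1).const_cpow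
      (.inl (Complex.ofReal_ne_zero.mpr ht.ne'))
  simpa only [mul_smul, Complex.coe_smul] using hpow.smul_const v

theorem mellinConvergent_log_smul_and_hasDerivAt_mellin {f : ℝ → E} {s : ℂ}
    (hf : ∀ᶠ z in 𝓝 s, MellinConvergent f z) :
    MellinConvergent (fun t ↦ Real.log t • f t) s ∧
      HasDerivAt (mellin f) (mellin (fun t ↦ Real.log t • f t) s) s := by
  obtain ⟨ε, hε, hball⟩ := Metric.eventually_nhds_iff.mp hf
  obtain ⟨δ, hδ, hδε⟩ : ∃ δ, 0 < δ ∧ 2 * δ < ε := ⟨ε / 3, by linarith, by linarith⟩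
  have hright : MellinConvergent f (s + (2 * δ : ℝ)) :=
    hball (by simpa [abs_of_pos hδ] using hδε)
  have hleft : MellinConvergent f (s - (2 * δ : ℝ)) :=
    hball (by simpa [abs_of_pos hδ] using hδε)
  have hmeas : AEStronglyMeasurable (fun t : ℝ ↦ (t : ℂ) ^ (s - 1) • Real.log t • f t)
      (volume.restrict (Ioi 0)) := by
    simp only [smul_comm _ (Real.log _)]
    exact Real.measurable_log.aestronglyMeasurable.smul hf.self_of_nhds.aestronglyMeasurable
  exact hasDerivAt_integral_of_dominated_loc_of_deriv_le (Metric.ball_mem_nhds s hδ)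
    (hf.mono fun z hz ↦ hz.aestronglyMeasurable) hf.self_of_nhds hmeas
    (ae_restrict_of_forall_mem measurableSet_Ioi fun t ht z hz ↦
      norm_cpow_sub_one_smul_log_smul_le ht hδ (mem_ball_iff_norm.mp hz).le (f t))
    ((hright.norm.add hleft.norm).const_mul δ⁻¹)
    (ae_restrict_of_forall_mem measurableSet_Ioi fun t ht z _ ↦
      hasDerivAt_cpow_sub_one_smul ht z (f t))

theorem iteratedDeriv_mellin {f : ℝ → E} {s : ℂ} (hf : ∀ᶠ z in 𝓝 s, MellinConvergent f z) (n : ℕ) :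
    iteratedDeriv n (mellin f) s = mellin (fun t ↦ Real.log t ^ n • f t) s := by
  induction n generalizing f with
  | zero => simp
  | succ n ih =>
    have hlog := hf.eventually_nhds.mono fun z hz ↦
      mellinConvergent_log_smul_and_hasDerivAt_mellin hz
    have hderiv : deriv (mellin f) =ᶠ[𝓝 s] mellin (fun t ↦ Real.log t • f t) :=
      hlog.mono fun z hz ↦ hz.2.deriv
    rw [iteratedDeriv_succ', hderiv.iteratedDeriv_eq n, ih (hlog.mono fun z hz ↦ hz.1)]
    simp only [smul_smul, pow_succ]

theorem analyticAt_mellin [CompleteSpace E] {f : ℝ → E} {s : ℂ}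
    (hf : ∀ᶠ z in 𝓝 s, MellinConvergent f z) : AnalyticAt ℂ (mellin f) s :=
  Complex.analyticAt_iff_eventually_differentiableAt.mpr <| hf.eventually_nhds.mono fun _ hz ↦
    (mellinConvergent_log_smul_and_hasDerivAt_mellin hz).2.differentiableAt

theorem integrable_cpow_smul_of_support_subset_isCompact {f : ℝ → E} {K : Set ℝ}
    (hK : IsCompact K) (hK0 : 0 ∉ K) (hfK : Function.support f ⊆ K) (hf : IntegrableOn f K)
    (s : ℂ) :
    Integrable (fun t : ℝ ↦ (t : ℂ) ^ s • f t) := by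
  have hcpow : ContinuousOn (fun t : ℝ ↦ (t : ℂ) ^ s) K := fun t ht ↦
    (Complex.continuousAt_ofReal_cpow_const t s
      (.inr (ne_of_mem_of_not_mem ht hK0))).continuousWithinAt
  have hsupport : Function.support (fun t : ℝ ↦ (t : ℂ) ^ s • f t) ⊆ K :=
    (Function.support_smul_subset_right _ f).trans hfK
  exact (integrableOn_iff_integrable_of_support_subset hsupport).mp (hf.continuousOn_smul hcpow hK)

theorem one_div_factorial_smul_iteratedDeriv_sum_pow_smul_mellin [CompleteSpace E] {n : ℕ}
    {I : Finset ℕ} (hI : ∀ k ∈ I, k ≤ n) {h : ℕ → ℝ → E} {s : ℂ}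
    (hconv : ∀ k ∈ I, ∀ᶠ z in 𝓝 s, MellinConvergent (h k) z) :
    (1 / n ! : ℂ) • iteratedDeriv n (fun a ↦ ∑ k ∈ I, a ^ (n - k) • mellin (h k) (a + s)) 0
      = ∑ k ∈ I, (1 / k ! : ℂ) • mellin (fun r ↦ Real.log r ^ k • h k r) s := by
  have hcontDiff : ∀ k ∈ I, ContDiffAt ℂ n (fun a ↦ mellin (h k) (a + s)) 0 := fun k hk ↦
    ((analyticAt_mellin (hconv k hk)).comp_of_eq (analyticAt_id.add analyticAt_const)
      (zero_add s)).contDiffAt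
  rw [one_div_factorial_smul_iteratedDeriv_sum_pow_smul_zero hI hcontDiff]
  refine Finset.sum_congr rfl fun k hk ↦ ?_
  rw [iteratedDeriv_comp_add_const]
  simp only [zero_add, iteratedDeriv_mellin (hconv k hk)]

end Mellin

theorem residue_formula_for_scaling_integrals_general {E : Type*} [NormedAddCommGroup E]
    [NormedSpace ℂ E] [CompleteSpace E] (N : ℕ) (s : ℂ) (h : ℕ → ℝ → E) {U : Set ℂ}
    (hU : IsOpen U) (hU0 : 0 ∈ U)
    (hint : ∀ k < N, ∀ a ∈ U, IntegrableOn (fun r : ℝ ↦ (r : ℂ) ^ (a + s) • h k r) (Ioi 0)) :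
    (∀ k < N, DifferentiableOn ℂ (fun a : ℂ ↦ ∫ r in Ioi (0 : ℝ), (r : ℂ) ^ (a + s) • h k r) U) ∧
    (1 / (N - 1)! : ℂ) •
        iteratedDeriv (N - 1)
          (fun a : ℂ ↦ ∑ k ∈ Finset.range N,
            a ^ (N - 1 - k) • ∫ r in Ioi (0 : ℝ), (r : ℂ) ^ (a + s) • h k r) 0
      = ∑ k ∈ Finset.range N,
          ∫ r in Ioi (0 : ℝ), ((r : ℂ) ^ s * ((Real.log r : ℂ) ^ k / k !)) • h k r := by
  have hmellin (k : ℕ) (a : ℂ) :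
      ∫ r in Ioi (0 : ℝ), (r : ℂ) ^ (a + s) • h k r = mellin (h k) (a + (s + 1)) := by
    simp only [mellin, ← add_assoc, add_sub_cancel_right]
  have hconv : ∀ k < N, ∀ a ∈ U, ∀ᶠ z in 𝓝 (a + (s + 1)), MellinConvergent (h k) z := by
    intro k hk a ha
    rw [← map_add_right_nhds, eventually_map]
    filter_upwards [hU.mem_nhds ha] with b hb
    simpa only [MellinConvergent, ← add_assoc, add_sub_cancel_right] using hint k hk b hb
  simp only [hmellin]
  refine ⟨fun k hk a ha ↦ ((mellinConvergent_log_smul_and_hasDerivAt_mellin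
    (hconv k hk a ha)).2.comp_add_const a (s + 1)).differentiableAt.differentiableWithinAt, ?_⟩
  rw [one_div_factorial_smul_iteratedDeriv_sum_pow_smul_mellin
    (fun k hk ↦ by have := Finset.mem_range.mp hk; lia)
    fun k hk ↦ by simpa only [zero_add] using hconv k (Finset.mem_range.mp hk) 0 hU0]
  refine Finset.sum_congr rfl fun k _ ↦ ?_
  rw [mellin, ← integral_smul]
  congr! 2 with r
  rw [add_sub_cancel_right, ← Complex.coe_smul, smul_smul, smul_smul, Complex.ofReal_pow]
  ring_nf

/-- the residue identity behind the construction of extensions of almost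
homogeneously scaling distributions. For continuous `h_0, …, h_{N-1}` compactly supported
in `(0,∞)`, each `I_k(a) = ∫_0^∞ r^{a+s} h_k(r) dr` is entire, and
`(1/(N-1)!) (d/da)^{N-1} [Σ_k a^{N-1-k} I_k(a)]` at `a = 0` (i.e. the residue at `a = 0`
of `Σ_k a^{-(k+1)} I_k(a)`) equals `Σ_k ∫_0^∞ r^s ((log r)^k / k!) h_k(r) dr`. -/
theorem residue_formula_for_scaling_integrals
    (N : ℕ) (hN : 1 ≤ N) (s : ℂ) (h : ℕ → ℝ → ℂ)
    (hcont : ∀ k < N, Continuous (h k))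
    (hsupp : ∀ k < N, ∃ K : Set ℝ, IsCompact K ∧ K ⊆ Set.Ioi (0 : ℝ) ∧
      Function.support (h k) ⊆ K) :
    (∀ k < N, Differentiable ℂ
      (fun a : ℂ => ∫ r in Set.Ioi (0 : ℝ), (r : ℂ) ^ (a + s) * h k r)) ∧
    (1 / (Nat.factorial (N - 1) : ℂ)) *
        iteratedDeriv (N - 1)
          (fun a : ℂ => ∑ k ∈ Finset.range N,
            a ^ (N - 1 - k) * ∫ r in Set.Ioi (0 : ℝ), (r : ℂ) ^ (a + s) * h k r) 0
      = ∑ k ∈ Finset.range N,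
          ∫ r in Set.Ioi (0 : ℝ),
            (r : ℂ) ^ s * (((Real.log r : ℂ)) ^ k / (Nat.factorial k : ℂ)) * h k r := by
  have hint : ∀ k < N, ∀ a ∈ univ,
      IntegrableOn (fun r : ℝ ↦ (r : ℂ) ^ (a + s) • h k r) (Ioi 0) := by
    intro k hk a _
    obtain ⟨K, hK, hKpos, hsupport⟩ := hsupp k hk
    exact (integrable_cpow_smul_of_support_subset_isCompact hK
      (notMem_subset hKpos self_notMem_Ioi) hsupport
      ((hcont k hk).continuousOn.integrableOn_compact hK) (a + s)).integrableOn
  simpa only [differentiableOn_univ, smul_eq_mul] using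
    residue_formula_for_scaling_integrals_general N s h isOpen_univ (mem_univ 0) hint
end

section
/- Let V be a complex vector space with a hermitian sesquilinear form ⟨·,·⟩, and let (Q_k)_{k∈ℕ} be a sequence of linear maps V → V, each symmetric with respect to ⟨·,·⟩, satisfying the nilpotency relations Σ_{k=0}^m Q_k ∘ Q_{m-k} = 0 for every m ∈ ℕ. Let n ≥ 1 and let ψ_0,…,ψ_{n-1} ∈ V satisfy Σ_{k=0}^m Q_k ψ_{m-k} = 0 for every m with 0 ≤ m ≤ n-1. For m ∈ ℕ define χ_m := Σ_{k=0}^{min(m,n-1)} Q_{m-k} ψ_k. Then: (i) χ_m = 0 for all m ≤ n-1; (ii) Σ_{k=0}^m Q_{m-k} χ_k = 0 for every m ∈ ℕ; (iii) Σ_{k=0}^m ⟨χ_k, χ_{m-k}⟩ = 0 for every m ∈ ℕ; in particular Q_0 χ_n = 0 and ⟨χ_n, χ_n⟩ = 0. -/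
/-!
Extend `ψ` by zero beyond `n - 1` and regard `Q`, `ψ` and `χ` as formal power series in the coupling
`λ`, so that `χ = Q ψ`. Then `Q χ = Q² ψ = 0` and, by symmetry of `Q`, `⟨χ, χ⟩ = ⟨ψ, Q χ⟩ = 0`.
The equations for `ψ` say that `χ` vanishes below order `n`, so the coefficient of `λ ^ n` in `Q χ`
is `Q 0 (χ n)`, and that of `λ ^ (2 * n)` in `⟨χ, χ⟩` is `⟨χ n, χ n⟩`.
-/

open Finset hiding antidiagonal mem_antidiagonal
open Finset.HasAntidiagonal

theorem sum_antidiagonal_assoc {ι M : Type*} [AddMonoid ι] [HasAntidiagonal ι] [AddCommMonoid M]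
    (f : ι → ι → ι → M) (m : ι) :
    ∑ p ∈ antidiagonal m, ∑ q ∈ antidiagonal p.1, f q.1 q.2 p.2 =
      ∑ p ∈ antidiagonal m, ∑ q ∈ antidiagonal p.2, f p.1 q.1 q.2 := by
  rw [sum_sigma', sum_sigma']
  apply sum_nbij' (fun ⟨⟨_, k⟩, ⟨i, j⟩⟩ ↦ ⟨(i, j + k), (j, k)⟩)
    (fun ⟨⟨i, _⟩, ⟨j, k⟩⟩ ↦ ⟨(i + j, k), (i, j)⟩) <;>
    grind [mem_antidiagonal, add_assoc]

/-- The Cauchy product of the families `a` and `b` along a biadditive map `f`, that is, the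
coefficients of `f (∑ λ ^ i • a i) (∑ λ ^ j • b j)`. Letting `f` vary covers the action of a series
of operators on a series of vectors, the composition of two series of operators, and the pairing of
two series of vectors. -/
def cauchyProduct {ι M N P : Type*} [AddMonoid ι] [HasAntidiagonal ι]
    [AddCommMonoid M] [AddCommMonoid N] [AddCommMonoid P]
    (f : M →+ N →+ P) (a : ι → M) (b : ι → N) (m : ι) : P :=
  ∑ p ∈ antidiagonal m, f (a p.1) (b p.2)

namespace cauchyProduct

variable {ι M N P M' N' L L' X : Type*} [AddCommMonoid M] [AddCommMonoid N] [AddCommMonoid P]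
  [AddCommMonoid M'] [AddCommMonoid N'] [AddCommMonoid L] [AddCommMonoid L'] [AddCommMonoid X]

section AddMonoid

variable [AddMonoid ι] [HasAntidiagonal ι]

theorem zero_right (f : M →+ N →+ P) (a : ι → M) : cauchyProduct f a 0 = 0 := by
  funext m
  simp [cauchyProduct]

-- Besides genuine associativity (`b = b'`), this moves a series of operators to its adjoint.
theorem assoc {f : L →+ P →+ X} {g : M →+ N →+ L} {f' : M →+ L' →+ X} {g' : N' →+ P →+ L'}
    {a : ι → M} {b : ι → N} {b' : ι → N'} {c : ι → P}
    (h : ∀ i j k, f (g (a i) (b j)) (c k) = f' (a i) (g' (b' j) (c k))) :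
    cauchyProduct f (cauchyProduct g a b) c = cauchyProduct f' a (cauchyProduct g' b' c) := by
  funext m
  simp only [cauchyProduct, map_sum, AddMonoidHom.finsetSum_apply, h]
  exact sum_antidiagonal_assoc (fun i j k ↦ f' (a i) (g' (b' j) (c k))) m

end AddMonoid

section AddCommMonoid

variable [AddCommMonoid ι] [HasAntidiagonal ι]

theorem flip (f : M →+ N →+ P) (a : ι → M) (b : ι → N) :
    cauchyProduct f.flip b a = cauchyProduct f a b := by
  funext m
  rw [cauchyProduct, ← map_swap_antidiagonal, sum_map]
  rfl

theorem eval_eval (v : ι → M) (Q : ι → M →+ N) (R : ι → N →+ P) :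
    cauchyProduct .eval (cauchyProduct .eval v Q) R =
      cauchyProduct .eval v (cauchyProduct .compHom R Q) := by
  rw [← flip .compHom]
  exact assoc fun _ _ _ ↦ rfl

theorem eval_left_eq_eval_right {B : N →+ N' →+ P} {B' : M →+ M' →+ P} {Q : ι → M →+ N}
    {R : ι → N' →+ M'} (hQR : ∀ k v w, B (Q k v) w = B' v (R k w)) (v : ι → M) (w : ι → N') :
    cauchyProduct B (cauchyProduct .eval v Q) w =
      cauchyProduct B' v (cauchyProduct .eval w R) := by
  rw [← flip .eval w]
  exact assoc fun i j k ↦ hQR j (v i) (w k)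

end AddCommMonoid

section NatIndexed

theorem eq_sum_range (f : M →+ N →+ P) (a : ℕ → M) (b : ℕ → N) (m : ℕ) :
    cauchyProduct f a b m = ∑ k ∈ range (m + 1), f (a k) (b (m - k)) :=
  Nat.sum_antidiagonal_eq_sum_range_succ (fun i j ↦ f (a i) (b j)) m

theorem eq_sum_range' (f : M →+ N →+ P) (a : ℕ → M) (b : ℕ → N) (m : ℕ) :
    cauchyProduct f a b m = ∑ k ∈ range (m + 1), f (a (m - k)) (b k) := by
  rw [← flip]
  exact eq_sum_range f.flip b a m

theorem indicator_Iio (f : M →+ N →+ P) (a : ℕ → M) (b : ℕ → N) (n m : ℕ) :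
    cauchyProduct f ((Set.Iio n).indicator a) b m =
      ∑ k ∈ range (min (m + 1) n), f (a k) (b (m - k)) := by
  rw [eq_sum_range, ← range_inter_range, ← filter_mem_eq_inter, sum_filter]
  refine sum_congr rfl fun k _ ↦ ?_
  by_cases hk : k < n <;> simp [hk]

theorem apply_add_of_forall_lt (f : M →+ N →+ P) {a : ℕ → M} {b : ℕ → N} {i j : ℕ}
    (ha : ∀ k < i, a k = 0) (hb : ∀ k < j, b k = 0) :
    cauchyProduct f a b (i + j) = f (a i) (b j) := by
  refine sum_eq_single_of_mem (i, j) (mem_antidiagonal.2 rfl) fun p hp hne ↦ ?_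
  have hlt : p.1 < i ∨ p.2 < j := by
    by_contra! hge
    rw [mem_antidiagonal] at hp
    exact hne (Prod.ext (by lia) (by lia))
  rcases hlt with hlt | hlt
  · rw [ha _ hlt, map_zero, AddMonoidHom.zero_apply]
  · rw [hb _ hlt, map_zero]

end NatIndexed

end cauchyProduct

theorem brst_deformation_chi_identities_general {V A : Type*} [AddCommMonoid V] [AddCommMonoid A]
    (B : V →+ V →+ A) (Q : ℕ → V →+ V)
    (hQ_symm : ∀ (k : ℕ) (v w : V), B (Q k v) w = B v (Q k w))
    (hQ_nilp : ∀ (m : ℕ) (v : V), ∑ k ∈ range (m + 1), Q k (Q (m - k) v) = 0)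
    (n : ℕ) (ψ : ℕ → V)
    (hψ : ∀ m < n, ∑ k ∈ range (m + 1), Q k (ψ (m - k)) = 0)
    (χ : ℕ → V)
    (hχ : ∀ m : ℕ, χ m = ∑ k ∈ range (min (m + 1) n), Q (m - k) (ψ k)) :
    (∀ m < n, χ m = 0) ∧
    (∀ m : ℕ, ∑ k ∈ range (m + 1), Q (m - k) (χ k) = 0) ∧
    (∀ m : ℕ, ∑ k ∈ range (m + 1), B (χ k) (χ (m - k)) = 0) ∧
    Q 0 (χ n) = 0 ∧ B (χ n) (χ n) = 0 := by
  have hQQ : cauchyProduct .compHom Q Q = 0 := by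
    ext m v
    simpa [cauchyProduct.eq_sum_range] using hQ_nilp m v
  have hχ_eq : χ = cauchyProduct .eval ((Set.Iio n).indicator ψ) Q :=
    funext fun m ↦ (hχ m).trans (cauchyProduct.indicator_Iio .eval ψ Q n m).symm
  have hχ_zero : ∀ m < n, χ m = 0 := fun m hm ↦ by
    rw [hχ, min_eq_left (by lia), ← hψ m hm]
    exact (cauchyProduct.eq_sum_range .eval ψ Q m).symm.trans
      (cauchyProduct.eq_sum_range' .eval ψ Q m)
  have hQχ : cauchyProduct .eval χ Q = 0 := by
    rw [hχ_eq, cauchyProduct.eval_eval, hQQ, cauchyProduct.zero_right]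
  have hχχ : cauchyProduct B χ χ = 0 := by
    nth_rw 1 [hχ_eq]
    rw [cauchyProduct.eval_left_eq_eval_right hQ_symm, hQχ, cauchyProduct.zero_right]
  refine ⟨hχ_zero, fun m ↦ ?_, fun m ↦ ?_, ?_, ?_⟩
  · exact (cauchyProduct.eq_sum_range .eval χ Q m).symm.trans (congrFun hQχ m)
  · exact (cauchyProduct.eq_sum_range B χ χ m).symm.trans (congrFun hχχ m)
  · exact (cauchyProduct.apply_add_of_forall_lt .eval hχ_zero (j := 0) (by simp)).symm.trans
      (congrFun hQχ n)
  · exact (cauchyProduct.apply_add_of_forall_lt B hχ_zero hχ_zero).symm.trans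
      (congrFun hχχ (n + n))

/-- the intermediate identities in the inductive deformation construction
of BRST-closed states. Here `B` is a hermitian sesquilinear form on a complex vector
space `V` (conjugate-linear in the first argument), `Q_k` are `B`-symmetric linear maps
with `Σ_{k=0}^m Q_k Q_{m-k} = 0` for all `m`, and `ψ_0, …, ψ_{n-1}` satisfy
`Σ_{k=0}^m Q_k ψ_{m-k} = 0` for `m ≤ n-1`. With
`χ_m = Σ_{k=0}^{min(m,n-1)} Q_{m-k} ψ_k` one has: (i) `χ_m = 0` for `m ≤ n-1`;
(ii) `Σ_{k=0}^m Q_{m-k} χ_k = 0`; (iii) `Σ_{k=0}^m ⟨χ_k, χ_{m-k}⟩ = 0`; in particular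
`Q_0 χ_n = 0` and `⟨χ_n, χ_n⟩ = 0`. -/
theorem brst_deformation_chi_identities
    {V : Type*} [AddCommGroup V] [Module ℂ V]
    (B : V → V → ℂ)
    (hB_add_left : ∀ v w u : V, B (v + w) u = B v u + B w u)
    (hB_add_right : ∀ u v w : V, B u (v + w) = B u v + B u w)
    (hB_smul_left : ∀ (a : ℂ) (v w : V), B (a • v) w = (starRingEnd ℂ) a * B v w)
    (hB_smul_right : ∀ (a : ℂ) (v w : V), B v (a • w) = a * B v w)
    (hB_herm : ∀ v w : V, B v w = (starRingEnd ℂ) (B w v))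
    (Q : ℕ → V →ₗ[ℂ] V)
    (hQ_symm : ∀ (k : ℕ) (v w : V), B (Q k v) w = B v (Q k w))
    (hQ_nilp : ∀ (m : ℕ) (v : V), ∑ k ∈ Finset.range (m + 1), Q k (Q (m - k) v) = 0)
    (n : ℕ) (hn : 1 ≤ n) (ψ : ℕ → V)
    (hψ : ∀ m < n, ∑ k ∈ Finset.range (m + 1), Q k (ψ (m - k)) = 0)
    (χ : ℕ → V)
    (hχ : ∀ m : ℕ, χ m = ∑ k ∈ Finset.range (min (m + 1) n), Q (m - k) (ψ k)) :
    (∀ m < n, χ m = 0) ∧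
    (∀ m : ℕ, ∑ k ∈ Finset.range (m + 1), Q (m - k) (χ k) = 0) ∧
    (∀ m : ℕ, ∑ k ∈ Finset.range (m + 1), B (χ k) (χ (m - k)) = 0) ∧
    Q 0 (χ n) = 0 ∧ B (χ n) (χ n) = 0 := by
  exact brst_deformation_chi_identities_general
    (AddMonoidHom.mk' (fun v ↦ AddMonoidHom.mk' (B v) (hB_add_right v))
      fun v w ↦ AddMonoidHom.ext (hB_add_left v w))
    (fun k ↦ (Q k).toAddMonoidHom) hQ_symm hQ_nilp n ψ hψ χ hχ
end

section
/- Let n ≥ 1, p ≥ 0, and for each m with 0 ≤ m ≤ p let β_m be a smooth function on ℝ^n with real components β_m^{μ ν_1 … ν_m σ} (all indices ranging over {1,…,n}), symmetric under permutations of the indices ν_1,…,ν_m. Suppose that for all smooth compactly supported functions h_1, h_2 : ℝ^n → ℝ one has ∫_{ℝ^n} Σ_{m=0}^p Σ_{indices} β_m^{μ ν_1…ν_m σ}(x) ∂_μ h_1(x) ∂_{ν_1}⋯∂_{ν_m}∂_σ h_2(x) dx = 0. Then the weight-one total symmetrization of the top coefficient vanishes identically: β_p^{(μ ν_1 … ν_p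 σ)}(x) = 0 for all x ∈ ℝ^n, i.e. the average of β_p over all permutations of its p+2 indices is zero. -/
open MeasureTheory

/-!
Test the hypothesis on `h₁ = exp (-tφ) χ` and `h₂ = exp (tφ) ψ` with `φ` a linear functional and
`χ`, `ψ` smooth and compactly supported. The exponentials cancel, so the integrand is a polynomial
in `t` whose top coefficient is the principal symbol of the bidifferential operator at the pair of
covectors `(-φ, φ)`, times `χ ψ`. The integral vanishes for every `t`, hence so does the integral
of the top coefficient. As `χ` and `ψ` are arbitrary, the principal symbol vanishes at `(-φ, φ)`
for every `φ`, and polarization in `φ` gives the vanishing of the symmetrized coefficient.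
-/

section ExponentialConjugation

open Polynomial

variable {E : Type*} [NormedAddCommGroup E] [NormedSpace ℝ E]

/-- The polynomial in `t` with value `exp (-t φ x) * D ^ k (exp (t φ) f) x v`: the derivative of
`f` along the directions `v`, conjugated by `exp (t φ)`. The recursion expresses that conjugation
turns the directional derivative `∂_w` into `∂_w + t φ w`. -/
noncomputable def expConjDeriv (φ : E →L[ℝ] ℝ) : {k : ℕ} → (Fin k → E) → (E → ℝ) → E → ℝ[X]
  | 0, _, f, x => C (f x)
  | k + 1, v, f, x =>
    expConjDeriv φ (Fin.init v) (fun y => fderiv ℝ f y (v (Fin.last k))) x +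
      C (φ (v (Fin.last k))) * X * expConjDeriv φ (Fin.init v) f x

theorem contDiff_fderiv_apply_const {n : WithTop ℕ∞} {f : E → ℝ} (hf : ContDiff ℝ (n + 1) f)
    (v : E) : ContDiff ℝ n (fun x => fderiv ℝ f x v) :=
  (hf.fderiv_right le_rfl).clm_apply contDiff_const

theorem contDiff_exp_mul (φ : E →L[ℝ] ℝ) (t : ℝ) {f : E → ℝ} {n : WithTop ℕ∞}
    (hf : ContDiff ℝ n f) : ContDiff ℝ n (fun x => Real.exp (t * φ x) * f x) :=
  (contDiff_const.mul φ.contDiff).exp.mul hf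

theorem fderiv_exp_mul_apply (φ : E →L[ℝ] ℝ) (t : ℝ) {f : E → ℝ} {x : E}
    (hf : DifferentiableAt ℝ f x) (v : E) :
    fderiv ℝ (fun y => Real.exp (t * φ y) * f y) x v =
      Real.exp (t * φ x) * fderiv ℝ f x v + (t * φ v) * (Real.exp (t * φ x) * f x) := by
  have hexp : HasFDerivAt (fun y => Real.exp (t * φ y)) (Real.exp (t * φ x) • (t • φ)) x :=
    (φ.hasFDerivAt.const_mul t).exp
  rw [(hexp.fun_mul hf.hasFDerivAt).fderiv]
  simp only [add_apply, smul_apply, smul_eq_mul]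
  ring

theorem iteratedFDeriv_exp_mul_apply (φ : E →L[ℝ] ℝ) (t : ℝ) {k : ℕ} (v : Fin k → E)
    {f : E → ℝ} (hf : ContDiff ℝ k f) (x : E) :
    iteratedFDeriv ℝ k (fun y => Real.exp (t * φ y) * f y) x v =
      Real.exp (t * φ x) * (expConjDeriv φ v f x).eval t := by
  induction k generalizing f with
  | zero => simp [expConjDeriv]
  | succ k ih =>
    set w := v (Fin.last k)
    have hf_succ : ContDiff ℝ (k + 1) f := mod_cast hf
    have hf_k : ContDiff ℝ k f := hf_succ.of_le le_self_add
    have hf' : ContDiff ℝ k (fun y => fderiv ℝ f y w) := contDiff_fderiv_apply_const hf_succ w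
    calc iteratedFDeriv ℝ (k + 1) (fun y => Real.exp (t * φ y) * f y) x v
      _ = iteratedFDeriv ℝ k
            (fun y => fderiv ℝ (fun z => Real.exp (t * φ z) * f z) y w) x (Fin.init v) := by
        rw [iteratedFDeriv_succ_apply_right,
          iteratedFDeriv_clm_apply_const_apply
            ((contDiff_exp_mul φ t hf_succ).fderiv_right le_rfl) le_rfl]
      _ = iteratedFDeriv ℝ k (fun y => Real.exp (t * φ y) * fderiv ℝ f y w +
            (t * φ w) • (Real.exp (t * φ y) * f y)) x (Fin.init v) := by
        congr 2
        ext y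
        exact fderiv_exp_mul_apply φ t (hf_succ.differentiable (by simp) y) w
      _ = Real.exp (t * φ x) *
              (expConjDeriv φ (Fin.init v) (fun y => fderiv ℝ f y w) x).eval t +
            (t * φ w) * (Real.exp (t * φ x) * (expConjDeriv φ (Fin.init v) f x).eval t) := by
        rw [fun_iteratedFDeriv_add_apply (contDiff_exp_mul φ t hf').contDiffAt
            ((contDiff_exp_mul φ t hf_k).const_smul _).contDiffAt,
          iteratedFDeriv_const_smul_apply' (contDiff_exp_mul φ t hf_k).contDiffAt]
        simp only [add_apply, smul_apply, smul_eq_mul, ih _ hf_k, ih _ hf']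
      _ = Real.exp (t * φ x) * (expConjDeriv φ v f x).eval t := by
        simp only [expConjDeriv, eval_add, eval_mul, eval_C, eval_X, w]
        ring

theorem natDegree_expConjDeriv_le (φ : E →L[ℝ] ℝ) {k : ℕ} (v : Fin k → E) (f : E → ℝ) (x : E) :
    (expConjDeriv φ v f x).natDegree ≤ k := by
  induction k generalizing f with
  | zero => simp [expConjDeriv]
  | succ k ih =>
    refine natDegree_add_le_of_degree_le ((ih _ _).trans k.le_succ) ?_
    calc (C (φ (v (Fin.last k))) * X * expConjDeriv φ (Fin.init v) f x).natDegree
      _ ≤ 1 + k :=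
        natDegree_mul_le_of_le ((natDegree_C_mul_le _ _).trans natDegree_X_le) (ih _ _)
      _ = k + 1 := Nat.add_comm 1 k

theorem coeff_expConjDeriv_self (φ : E →L[ℝ] ℝ) {k : ℕ} (v : Fin k → E) (f : E → ℝ) (x : E) :
    (expConjDeriv φ v f x).coeff k = (∏ i, φ (v i)) * f x := by
  induction k generalizing f with
  | zero => simp [expConjDeriv]
  | succ k ih =>
    rw [expConjDeriv, coeff_add, mul_assoc, coeff_C_mul, coeff_X_mul, ih,
      coeff_eq_zero_of_natDegree_lt (Nat.lt_succ_of_le (natDegree_expConjDeriv_le ..)),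
      Fin.prod_univ_castSucc]
    simp only [Fin.init]
    ring

theorem coeff_expConjDeriv_succ (φ : E →L[ℝ] ℝ) {k : ℕ} (v : Fin (k + 1) → E) (f : E → ℝ)
    (j : ℕ) :
    (fun x => (expConjDeriv φ v f x).coeff j) =
      (fun x => (expConjDeriv φ (Fin.init v) (fun y => fderiv ℝ f y (v (Fin.last k))) x).coeff j) +
        fun x => φ (v (Fin.last k)) * (X * expConjDeriv φ (Fin.init v) f x).coeff j := by
  ext x
  simp only [expConjDeriv, coeff_add, mul_assoc, coeff_C_mul, Pi.add_apply]

theorem continuous_coeff_expConjDeriv (φ : E →L[ℝ] ℝ) {k : ℕ} (v : Fin k → E) {f : E → ℝ}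
    (hf : ContDiff ℝ k f) (j : ℕ) : Continuous (fun x => (expConjDeriv φ v f x).coeff j) := by
  induction k generalizing f j with
  | zero => cases j <;> simp [expConjDeriv, coeff_C, hf.continuous, continuous_const]
  | succ k ih =>
    have hf_succ : ContDiff ℝ (k + 1) f := mod_cast hf
    rw [coeff_expConjDeriv_succ]
    refine (ih _ (contDiff_fderiv_apply_const hf_succ _) j).add (continuous_const.mul ?_)
    cases j with
    | zero => simp [continuous_const]
    | succ j => simpa only [coeff_X_mul] using ih _ (hf_succ.of_le le_self_add) j

theorem hasCompactSupport_coeff_expConjDeriv (φ : E →L[ℝ] ℝ) {k : ℕ} (v : Fin k → E) {f : E → ℝ}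
    (hf : HasCompactSupport f) (j : ℕ) :
    HasCompactSupport (fun x => (expConjDeriv φ v f x).coeff j) := by
  induction k generalizing f j with
  | zero =>
    cases j with
    | zero => simpa [expConjDeriv] using hf
    | succ j =>
      simp only [expConjDeriv, coeff_C_succ]
      exact HasCompactSupport.zero
  | succ k ih =>
    rw [coeff_expConjDeriv_succ]
    refine (ih _ (hf.fderiv_apply ℝ _) j).add (HasCompactSupport.mul_left ?_)
    cases j with
    | zero =>
      simp only [coeff_X_mul_zero]
      exact HasCompactSupport.zero
    | succ j => simpa only [coeff_X_mul] using ih _ hf j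

end ExponentialConjugation

section PolynomialIntegrand

open Polynomial

theorem integral_coeff_eq_zero_of_integral_eval_eq_zero {α : Type*} [MeasurableSpace α]
    {ρ : Measure α} {d : ℕ} {P : α → ℝ[X]} (hdeg : ∀ x, (P x).natDegree ≤ d)
    (hint : ∀ j, Integrable (fun x => (P x).coeff j) ρ)
    (heval : ∀ t, ∫ x, (P x).eval t ∂ρ = 0) (j : ℕ) : ∫ x, (P x).coeff j ∂ρ = 0 := by
  let Q : ℝ[X] := ∑ i ∈ Finset.range (d + 1), monomial i (∫ x, (P x).coeff i ∂ρ)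
  have hQ : Q = 0 := Polynomial.funext fun t => by
    calc Q.eval t = ∑ i ∈ Finset.range (d + 1), ∫ x, (P x).coeff i * t ^ i ∂ρ := by
          simp only [Q, eval_finsetSum, eval_monomial, integral_mul_const]
      _ = ∫ x, (P x).eval t ∂ρ := by
          rw [← integral_finsetSum _ fun i _ => (hint i).mul_const _]
          simp only [eval_eq_sum_range' (Nat.lt_succ_of_le (hdeg _))]
      _ = eval t 0 := by rw [heval, eval_zero]
  rcases le_or_gt j d with hj | hj
  · simpa [Q, finsetSum_coeff, coeff_monomial, Nat.lt_succ_of_le hj] using congrArg (coeff · j) hQ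
  · simp [coeff_eq_zero_of_natDegree_lt ((hdeg _).trans_lt hj)]

end PolynomialIntegrand

/-- The bidifferential monomial `b ∂_{u₁} ⋯ ∂_{u_l} h₁ ∂_{v₁} ⋯ ∂_{v_k} h₂` with variable
coefficient `b` and constant directions `uᵢ`, `vⱼ`. Bidifferential operators are encoded as finite
families of such monomials. -/
structure BidiffMonomial (E : Type*) where
  coeff : E → ℝ
  leftOrder : ℕ
  rightOrder : ℕ
  leftDirs : Fin leftOrder → E
  rightDirs : Fin rightOrder → E

namespace BidiffMonomial

open Polynomial
open scoped ContDiff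

/-- The total order of differentiation in both arguments. -/
def order {E : Type*} (T : BidiffMonomial E) : ℕ :=
  T.leftOrder + T.rightOrder

variable {E : Type*} [NormedAddCommGroup E] [NormedSpace ℝ E]

/-- The value of a bidifferential monomial on a pair of functions. -/
noncomputable def apply (T : BidiffMonomial E) (h₁ h₂ : E → ℝ) (x : E) : ℝ :=
  T.coeff x * iteratedFDeriv ℝ T.leftOrder h₁ x T.leftDirs *
    iteratedFDeriv ℝ T.rightOrder h₂ x T.rightDirs

/-- The symbol: derivatives of the first and second argument are replaced by the covectors `ξ`
and `η` respectively, without factors of the imaginary unit. -/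
noncomputable def symbol (T : BidiffMonomial E) (ξ η : E →L[ℝ] ℝ) (x : E) : ℝ :=
  T.coeff x * (∏ i, ξ (T.leftDirs i)) * ∏ i, η (T.rightDirs i)

/-- The polynomial in `t` whose value is that of the monomial on the pair
`(exp (-t φ) χ, exp (t φ) ψ)`. -/
noncomputable def expPoly (T : BidiffMonomial E) (φ : E →L[ℝ] ℝ) (χ ψ : E → ℝ) (x : E) : ℝ[X] :=
  C (T.coeff x) * (expConjDeriv (-φ) T.leftDirs χ x * expConjDeriv φ T.rightDirs ψ x)

theorem apply_exp_mul (T : BidiffMonomial E) (φ : E →L[ℝ] ℝ) {χ ψ : E → ℝ}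
    (hχ : ContDiff ℝ T.leftOrder χ) (hψ : ContDiff ℝ T.rightOrder ψ) (t : ℝ) (x : E) :
    T.apply (fun y => Real.exp (t * (-φ) y) * χ y) (fun y => Real.exp (t * φ y) * ψ y) x =
      (T.expPoly φ χ ψ x).eval t := by
  have hexp : Real.exp (t * (-φ) x) * Real.exp (t * φ x) = 1 := by
    rw [← Real.exp_add, neg_apply, mul_neg, neg_add_cancel, Real.exp_zero]
  simp only [BidiffMonomial.apply, expPoly, iteratedFDeriv_exp_mul_apply _ _ _ hχ,
    iteratedFDeriv_exp_mul_apply _ _ _ hψ, eval_mul, eval_C]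
  linear_combination (T.coeff x * (expConjDeriv (-φ) T.leftDirs χ x).eval t *
    (expConjDeriv φ T.rightDirs ψ x).eval t) * hexp

theorem natDegree_expPoly_le (T : BidiffMonomial E) (φ : E →L[ℝ] ℝ) (χ ψ : E → ℝ) (x : E) :
    (T.expPoly φ χ ψ x).natDegree ≤ T.order :=
  (natDegree_C_mul_le _ _).trans <|
    natDegree_mul_le_of_le (natDegree_expConjDeriv_le ..) (natDegree_expConjDeriv_le ..)

theorem coeff_expPoly_order (T : BidiffMonomial E) (φ : E →L[ℝ] ℝ) (χ ψ : E → ℝ) (x : E) :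
    (T.expPoly φ χ ψ x).coeff T.order = T.symbol (-φ) φ x * (χ x * ψ x) := by
  rw [expPoly, coeff_C_mul, order, coeff_mul_add_eq_of_natDegree_le
    (natDegree_expConjDeriv_le ..) (natDegree_expConjDeriv_le ..), coeff_expConjDeriv_self,
    coeff_expConjDeriv_self, symbol]
  ring

variable [MeasurableSpace E] {ρ : Measure E}

theorem locallyIntegrable_symbol (T : BidiffMonomial E) (hT : LocallyIntegrable T.coeff ρ)
    (ξ η : E →L[ℝ] ℝ) : LocallyIntegrable (T.symbol ξ η) ρ := by
  have hsymbol : T.symbol ξ η =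
      ((∏ i, ξ (T.leftDirs i)) * ∏ i, η (T.rightDirs i)) • T.coeff := by
    ext x
    simp only [symbol, Pi.smul_apply, smul_eq_mul]
    ring
  rw [hsymbol]
  exact hT.smul _

theorem integrable_coeff_expPoly [OpensMeasurableSpace E] (T : BidiffMonomial E)
    (hT : LocallyIntegrable T.coeff ρ) (φ : E →L[ℝ] ℝ) {χ ψ : E → ℝ}
    (hχ : ContDiff ℝ T.leftOrder χ) (hχc : HasCompactSupport χ)
    (hψ : ContDiff ℝ T.rightOrder ψ) (j : ℕ) :
    Integrable (fun x => (T.expPoly φ χ ψ x).coeff j) ρ := by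
  simp only [expPoly, coeff_C_mul]
  simp only [coeff_mul, Finset.mul_sum]
  refine integrable_finsetSum _ fun i _ => ?_
  exact hT.integrable_smul_right_of_hasCompactSupport
    ((continuous_coeff_expConjDeriv _ _ hχ _).mul (continuous_coeff_expConjDeriv _ _ hψ _))
    (hasCompactSupport_coeff_expConjDeriv _ _ hχc _).mul_right

variable {ι : Type*} {s : Finset ι} {T : ι → BidiffMonomial E} {d : ℕ}

theorem integral_sum_symbol_mul_eq_zero [OpensMeasurableSpace E]
    (hT : ∀ i ∈ s, LocallyIntegrable (T i).coeff ρ) (hd : ∀ i ∈ s, (T i).order ≤ d)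
    (hzero : ∀ h₁ h₂ : E → ℝ, ContDiff ℝ ∞ h₁ → HasCompactSupport h₁ →
      ContDiff ℝ ∞ h₂ → HasCompactSupport h₂ → ∫ x, ∑ i ∈ s, (T i).apply h₁ h₂ x ∂ρ = 0)
    (φ : E →L[ℝ] ℝ) {χ ψ : E → ℝ} (hχ : ContDiff ℝ ∞ χ) (hχc : HasCompactSupport χ)
    (hψ : ContDiff ℝ ∞ ψ) (hψc : HasCompactSupport ψ) :
    ∫ x, (∑ i ∈ s with (T i).order = d, (T i).symbol (-φ) φ x) * (χ x * ψ x) ∂ρ = 0 := by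
  let P (x : E) : ℝ[X] := ∑ i ∈ s, (T i).expPoly φ χ ψ x
  have hP_deg (x) : (P x).natDegree ≤ d :=
    natDegree_sum_le_of_forall_le s _ fun i hi =>
      ((T i).natDegree_expPoly_le φ χ ψ x).trans (hd i hi)
  have hP_int (j) : Integrable (fun x => (P x).coeff j) ρ := by
    simp only [P, finsetSum_coeff]
    exact integrable_finsetSum _ fun i hi =>
      (T i).integrable_coeff_expPoly (hT i hi) φ (contDiff_infty.1 hχ _) hχc
        (contDiff_infty.1 hψ _) j
  have hP_eval (t) : ∫ x, (P x).eval t ∂ρ = 0 := by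
    simp only [P, eval_finsetSum,
      ← apply_exp_mul _ φ (contDiff_infty.1 hχ _) (contDiff_infty.1 hψ _)]
    exact hzero _ _ (contDiff_exp_mul _ t hχ) hχc.mul_left (contDiff_exp_mul _ t hψ) hψc.mul_left
  have hP_top (x) : (P x).coeff d =
      (∑ i ∈ s with (T i).order = d, (T i).symbol (-φ) φ x) * (χ x * ψ x) := by
    rw [Finset.sum_filter, Finset.sum_mul, finsetSum_coeff]
    refine Finset.sum_congr rfl fun i hi => ?_
    split_ifs with h
    · rw [← h, coeff_expPoly_order]
    · rw [zero_mul, coeff_eq_zero_of_natDegree_lt]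
      exact ((T i).natDegree_expPoly_le φ χ ψ x).trans_lt ((hd i hi).lt_of_ne h)
  simpa only [hP_top] using integral_coeff_eq_zero_of_integral_eval_eq_zero hP_deg hP_int hP_eval d

theorem ae_sum_symbol_eq_zero [FiniteDimensional ℝ E] [BorelSpace E]
    (hT : ∀ i ∈ s, LocallyIntegrable (T i).coeff ρ) (hd : ∀ i ∈ s, (T i).order ≤ d)
    (hzero : ∀ h₁ h₂ : E → ℝ, ContDiff ℝ ∞ h₁ → HasCompactSupport h₁ →
      ContDiff ℝ ∞ h₂ → HasCompactSupport h₂ → ∫ x, ∑ i ∈ s, (T i).apply h₁ h₂ x ∂ρ = 0)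
    (φ : E →L[ℝ] ℝ) :
    ∀ᵐ x ∂ρ, ∑ i ∈ s with (T i).order = d, (T i).symbol (-φ) φ x = 0 := by
  have hsymbol : LocallyIntegrable
      (fun x => ∑ i ∈ s with (T i).order = d, (T i).symbol (-φ) φ x) ρ :=
    locallyIntegrable_finsetSum _ fun i hi =>
      (T i).locallyIntegrable_symbol (hT i (Finset.mem_of_mem_filter i hi)) (-φ) φ
  refine ae_eq_zero_of_integral_contDiff_smul_eq_zero hsymbol fun ψ hψ hψc => ?_
  obtain ⟨R, hR, hψR⟩ := hψc.isCompact.isBounded.subset_closedBall_lt 0 0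
  let χ : ContDiffBump (0 : E) := ⟨R, R + 1, hR, lt_add_one R⟩
  have hχψ (x) : χ x * ψ x = ψ x := by
    by_cases hx : x ∈ tsupport ψ
    · rw [χ.one_of_mem_closedBall (hψR hx), one_mul]
    · rw [image_eq_zero_of_notMem_tsupport hx, mul_zero]
  simpa only [hχψ, smul_eq_mul, mul_comm] using
    integral_sum_symbol_mul_eq_zero hT hd hzero φ χ.contDiff χ.hasCompactSupport hψ hψc

end BidiffMonomial

section Polarization

variable {κ : Type*} [Fintype κ]

theorem sum_perm_eq_zero_of_sum_mul_prod_eq_zero {N : ℕ} (c : (Fin N → κ) → ℝ)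
    (hc : ∀ ξ : κ → ℝ, ∑ k, c k * ∏ i, ξ (k i) = 0) (ι : Fin N → κ) :
    ∑ π : Equiv.Perm (Fin N), c (ι ∘ π) = 0 := by
  classical
  let f : (κ → ℝ) [×N]→L[ℝ] ℝ := ∑ k, c k •
    (ContinuousMultilinearMap.mkPiAlgebra ℝ (Fin N) ℝ).compContinuousLinearMap
      fun i => ContinuousLinearMap.proj (k i)
  have hf (v : Fin N → κ → ℝ) : f v = ∑ k, c k * ∏ i, v i (k i) := by simp [f]
  have hf_diag : (fun ξ => f fun _ => ξ) = 0 := funext fun ξ => (hf _).trans (hc ξ)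
  have hf_single (k : Fin N → κ) : f (fun i => Pi.single (k i) 1) = c k := by
    rw [hf, Finset.sum_eq_single k]
    · simp
    · intro l _ hl
      obtain ⟨i, hi⟩ := Function.ne_iff.1 hl
      rw [Finset.prod_eq_zero (Finset.mem_univ i) (Pi.single_eq_of_ne hi 1), mul_zero]
    · simp
  calc ∑ π : Equiv.Perm (Fin N), c (ι ∘ π)
    _ = ∑ π : Equiv.Perm (Fin N), f fun i => Pi.single (ι (π i)) 1 := by
      simp only [← hf_single, Function.comp_apply]
    _ = iteratedFDeriv ℝ N (fun ξ => f fun _ => ξ) 0 fun i => Pi.single (ι i) 1 :=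
      (f.iteratedFDeriv_comp_diagonal 0 fun i => Pi.single (ι i) 1).symm
    _ = 0 := by simp [hf_diag]

theorem sum_fin_add_two_eq_sum_cons_snoc {M : Type*} [AddCommMonoid M] {p : ℕ}
    (F : (Fin (p + 2) → κ) → M) :
    ∑ k, F k = ∑ μ, ∑ σ, ∑ ν : Fin p → κ,
      F (Fin.cons μ (Fin.snoc ν σ : Fin (p + 1) → κ)) := by
  classical
  rw [← (Fin.consEquiv fun _ : Fin (p + 2) => κ).sum_comp, Fintype.sum_prod_type]
  refine Finset.sum_congr rfl fun μ _ => ?_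
  rw [← (Fin.snocEquiv fun _ : Fin (p + 1) => κ).sum_comp, Fintype.sum_prod_type]
  rfl

end Polarization

section CoordinateOperator

variable {κ : Type*} [DecidableEq κ]

/-- The monomial `β_m^{μ ν₁ … ν_m σ} ∂_μ h₁ ∂_{ν₁} ⋯ ∂_{ν_m} ∂_σ h₂` on `ℝ ^ κ`; the index is the
tuple `⟨m, μ, σ, ν⟩`. -/
def coordMonomial (β : (m : ℕ) → κ → (Fin m → κ) → κ → (κ → ℝ) → ℝ)
    (i : Σ m : ℕ, κ × κ × (Fin m → κ)) : BidiffMonomial (κ → ℝ) where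
  coeff := β i.1 i.2.1 i.2.2.2 i.2.2.1
  leftOrder := 1
  rightOrder := i.1 + 1
  leftDirs _ := Pi.single i.2.1 1
  rightDirs j := Pi.single ((Fin.snoc i.2.2.2 i.2.2.1 : Fin (i.1 + 1) → κ) j) 1

/-- The indices `⟨m, μ, σ, ν⟩` with `m ≤ p` of the monomials that make up the coordinate
operator. -/
abbrev coordIndices (κ : Type*) [Fintype κ] (p : ℕ) : Finset (Σ m : ℕ, κ × κ × (Fin m → κ)) :=
  (Finset.range (p + 1)).sigma fun _ => Finset.univ

variable (β : (m : ℕ) → κ → (Fin m → κ) → κ → (κ → ℝ) → ℝ)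

theorem coordMonomial_order (i : Σ m : ℕ, κ × κ × (Fin m → κ)) :
    (coordMonomial β i).order = i.1 + 2 := by
  simp only [coordMonomial, BidiffMonomial.order]
  omega

variable [Fintype κ]

theorem coordMonomial_symbol (i : Σ m : ℕ, κ × κ × (Fin m → κ)) (ξ η : (κ → ℝ) →L[ℝ] ℝ)
    (x : κ → ℝ) :
    (coordMonomial β i).symbol ξ η x = β i.1 i.2.1 i.2.2.2 i.2.2.1 x * ξ (Pi.single i.2.1 1) *
      ∏ j, η (Pi.single ((Fin.snoc i.2.2.2 i.2.2.1 : Fin (i.1 + 1) → κ) j) 1) :=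
  congrArg (β i.1 i.2.1 i.2.2.2 i.2.2.1 x * · * _) (Fin.prod_univ_one _)

theorem coordMonomial_apply (i : Σ m : ℕ, κ × κ × (Fin m → κ)) (h₁ h₂ : (κ → ℝ) → ℝ)
    (x : κ → ℝ) :
    (coordMonomial β i).apply h₁ h₂ x =
      β i.1 i.2.1 i.2.2.2 i.2.2.1 x * fderiv ℝ h₁ x (Pi.single i.2.1 1) *
        iteratedFDeriv ℝ (i.1 + 1) h₂ x
          (fun j => Pi.single ((Fin.snoc i.2.2.2 i.2.2.1 : Fin (i.1 + 1) → κ) j) 1) :=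
  congrArg (β i.1 i.2.1 i.2.2.2 i.2.2.1 x * · * _) (iteratedFDeriv_one_apply _)

theorem sum_coordMonomial_apply (p : ℕ) (h₁ h₂ : (κ → ℝ) → ℝ) (x : κ → ℝ) :
    ∑ i ∈ coordIndices κ p, (coordMonomial β i).apply h₁ h₂ x =
      ∑ m ∈ Finset.range (p + 1), ∑ μ : κ, ∑ σ : κ, ∑ ν : Fin m → κ,
        β m μ ν σ x * fderiv ℝ h₁ x (Pi.single μ (1 : ℝ)) *
          iteratedFDeriv ℝ (m + 1) h₂ x
            (fun i : Fin (m + 1) => Pi.single ((Fin.snoc ν σ : Fin (m + 1) → κ) i) (1 : ℝ)) := by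
  simp only [Finset.sum_sigma, Fintype.sum_prod_type, coordMonomial_apply]

theorem sum_coordMonomial_symbol (p : ℕ) (ξ η : (κ → ℝ) →L[ℝ] ℝ) (x : κ → ℝ) :
    ∑ i ∈ coordIndices κ p with (coordMonomial β i).order = p + 2,
        (coordMonomial β i).symbol ξ η x =
      ∑ μ, ∑ σ, ∑ ν : Fin p → κ, β p μ ν σ x * ξ (Pi.single μ 1) *
        ∏ j, η (Pi.single ((Fin.snoc ν σ : Fin (p + 1) → κ) j) 1) := by
  simp only [Finset.sum_filter, coordMonomial_order, add_left_inj]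
  rw [Finset.sum_sigma, Finset.sum_eq_single_of_mem p (Finset.self_mem_range_succ p)]
  · simp only [if_true, Fintype.sum_prod_type, coordMonomial_symbol]
  · intro m _ hm
    simp only [if_neg hm, Finset.sum_const_zero]

end CoordinateOperator

section Vanishing

open scoped ContDiff

variable {κ : Type*} [Fintype κ] [DecidableEq κ] {ρ : Measure (κ → ℝ)}
  [IsLocallyFiniteMeasure ρ] [ρ.IsOpenPosMeasure] {p : ℕ}
  {β : (m : ℕ) → κ → (Fin m → κ) → κ → (κ → ℝ) → ℝ}

theorem sum_top_coefficient_mul_prod_eq_zero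
    (hlower : ∀ m < p, ∀ μ ν σ, LocallyIntegrable (β m μ ν σ) ρ)
    (htop : ∀ μ ν σ, Continuous (β p μ ν σ))
    (hint : ∀ h₁ h₂ : (κ → ℝ) → ℝ,
      ContDiff ℝ ∞ h₁ → HasCompactSupport h₁ → ContDiff ℝ ∞ h₂ → HasCompactSupport h₂ →
      ∫ x, ∑ i ∈ coordIndices κ p, (coordMonomial β i).apply h₁ h₂ x ∂ρ = 0)
    (ξ : κ → ℝ) (x : κ → ℝ) :
    ∑ μ, ∑ σ, ∑ ν : Fin p → κ,
      β p μ ν σ x * (ξ μ * ∏ j, ξ ((Fin.snoc ν σ : Fin (p + 1) → κ) j)) = 0 := by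
  let φ : (κ → ℝ) →L[ℝ] ℝ := ∑ j, ξ j • ContinuousLinearMap.proj j
  have hφ (j) : φ (Pi.single j 1) = ξ j := by simp [φ, sum_apply, Pi.single_apply]
  have hβ : ∀ i ∈ coordIndices κ p, LocallyIntegrable (coordMonomial β i).coeff ρ := by
    rintro ⟨m, μ, σ, ν⟩ hi
    rcases (Finset.mem_range_succ_iff.1 (Finset.mem_sigma.1 hi).1).lt_or_eq with hm | rfl
    · exact hlower m hm μ ν σ
    · exact (htop μ ν σ).locallyIntegrable
  have horder : ∀ i ∈ coordIndices κ p, (coordMonomial β i).order ≤ p + 2 := fun i hi => by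
    simpa [coordMonomial_order, Nat.lt_succ_iff] using hi
  have hae := BidiffMonomial.ae_sum_symbol_eq_zero hβ horder hint φ
  simp only [sum_coordMonomial_symbol, neg_apply, hφ, mul_neg, neg_mul, Finset.sum_neg_distrib,
    neg_eq_zero, mul_assoc] at hae
  exact congrFun (Measure.eq_of_ae_eq hae (by fun_prop) continuous_zero) x

theorem top_coefficient_symmetrization_vanishes_general
    (hlower : ∀ m < p, ∀ μ ν σ, LocallyIntegrable (β m μ ν σ) ρ)
    (htop : ∀ μ ν σ, Continuous (β p μ ν σ))
    (hint : ∀ h₁ h₂ : (κ → ℝ) → ℝ,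
      ContDiff ℝ ∞ h₁ → HasCompactSupport h₁ → ContDiff ℝ ∞ h₂ → HasCompactSupport h₂ →
      ∫ x, ∑ m ∈ Finset.range (p + 1), ∑ μ : κ, ∑ σ : κ, ∑ ν : Fin m → κ,
          β m μ ν σ x * fderiv ℝ h₁ x (Pi.single μ (1 : ℝ)) *
            iteratedFDeriv ℝ (m + 1) h₂ x
              (fun i : Fin (m + 1) => Pi.single ((Fin.snoc ν σ : Fin (m + 1) → κ) i) (1 : ℝ)) ∂ρ
        = 0)
    (ι : Fin (p + 2) → κ) (x : κ → ℝ) :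
    (∑ π : Equiv.Perm (Fin (p + 2)),
        β p ((ι ∘ π) 0) (fun i : Fin p => (ι ∘ π) i.succ.castSucc)
          ((ι ∘ π) (Fin.last (p + 1))) x)
      / (Nat.factorial (p + 2) : ℝ) = 0 := by
  let c (k : Fin (p + 2) → κ) : ℝ :=
    β p (k 0) (fun i => k i.succ.castSucc) (k (Fin.last (p + 1))) x
  have hc (ξ : κ → ℝ) : ∑ k, c k * ∏ i, ξ (k i) = 0 := by
    rw [sum_fin_add_two_eq_sum_cons_snoc]
    simpa only [c, ← Fin.succ_castSucc, ← Fin.succ_last, Fin.cons_zero, Fin.cons_succ,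
      Fin.snoc_castSucc, Fin.snoc_last, Fin.prod_univ_succ (n := p + 1)] using
      sum_top_coefficient_mul_prod_eq_zero hlower htop
        (by simpa only [sum_coordMonomial_apply] using hint) ξ x
  exact div_eq_zero_iff.2 (Or.inl (sum_perm_eq_zero_of_sum_mul_prod_eq_zero c hc ι))

end Vanishing

/-- if the bidifferential expression
`∫ Σ_{m=0}^p β_m^{μ ν_1…ν_m σ} ∂_μ h₁ ∂_{ν_1}⋯∂_{ν_m}∂_σ h₂` vanishes for all smooth
compactly supported `h₁, h₂`, then the weight-one total symmetrization of the top
coefficient `β_p` over all of its `p+2` indices vanishes identically. -/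
theorem top_coefficient_symmetrization_vanishes
    (n p : ℕ) (hn : 1 ≤ n)
    (β : (m : ℕ) → Fin n → (Fin m → Fin n) → Fin n → (Fin n → ℝ) → ℝ)
    (hsmooth : ∀ m ≤ p, ∀ (μ : Fin n) (ν : Fin m → Fin n) (σ : Fin n),
      ContDiff ℝ (⊤ : ℕ∞) (β m μ ν σ))
    (hsymν : ∀ m ≤ p, ∀ (μ : Fin n) (ν : Fin m → Fin n) (σ : Fin n) (x : Fin n → ℝ)
      (π : Equiv.Perm (Fin m)), β m μ (ν ∘ π) σ x = β m μ ν σ x)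
    (hint : ∀ h₁ h₂ : (Fin n → ℝ) → ℝ,
      ContDiff ℝ (⊤ : ℕ∞) h₁ → HasCompactSupport h₁ →
      ContDiff ℝ (⊤ : ℕ∞) h₂ → HasCompactSupport h₂ →
      ∫ x : Fin n → ℝ,
        ∑ m ∈ Finset.range (p + 1), ∑ μ : Fin n, ∑ σ : Fin n, ∑ ν : Fin m → Fin n,
          β m μ ν σ x * fderiv ℝ h₁ x (Pi.single μ (1 : ℝ)) *
            iteratedFDeriv ℝ (m + 1) h₂ x
              (fun i : Fin (m + 1) => Pi.single ((Fin.snoc ν σ : Fin (m + 1) → Fin n) i) (1 : ℝ))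
        = 0) :
    ∀ (ι : Fin (p + 2) → Fin n) (x : Fin n → ℝ),
      (∑ π : Equiv.Perm (Fin (p + 2)),
          β p ((ι ∘ π) 0) (fun i : Fin p => (ι ∘ π) i.succ.castSucc)
            ((ι ∘ π) (Fin.last (p + 1))) x)
        / (Nat.factorial (p + 2) : ℝ) = 0 := by
  exact top_coefficient_symmetrization_vanishes_general
    (fun m hm μ ν σ => (hsmooth m hm.le μ ν σ).continuous.locallyIntegrable)
    (fun μ ν σ => (hsmooth p le_rfl μ ν σ).continuous) hint
end

section
/- Let n ≥ 1, let p with 1 ≤ p ≤ n and k ≥ 0, and let A be a real array with components A_{μ_1…μ_p}{}^{ν_1…ν_k} (all indices in {1,…,n}), totally antisymmetric in the lower indices μ_1,…,μ_p and totally symmetric in the upper indices ν_1,…,ν_k. Suppose that the array obtained from A_{μ_1…μ_p}{}^{ν_1…ν_k} δ_γ{}^δ by weight-one antisymmetrization over the p+1 lower indices (μ_1,…,μ_p,γ) and weight-one symmetrization over the k+1 upper indices (ν_1,…,ν_k,δ) vanishes identically. Then (n + k − p) · A_{μ_1…μ_p}{}^{ν_1…ν_k} = k·p · S, where S is the array obtained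 by weight-one antisymmetrization over μ_1,…,μ_p and weight-one symmetrization over ν_1,…,ν_k of δ_{μ_1}{}^{ν_1} · Σ_{γ=1}^n A_{γ μ_2…μ_p}{}^{γ ν_2…ν_k}. In particular, if k = 0 and p < n then A = 0. -/
/-!
Modulo the symmetries of `A`, a permutation of the `p + 1` lower indices matters only through the
slot it sends to the last place, so the vanishing (anti)symmetrization is a signed sum over pairs
of slots `(i, j)`. Setting the two extra indices equal to `γ` and summing over `γ`, the pair of
extra slots contributes `n • A`, the pairs with exactly one extra slot contribute `k • A` and
`-p • A`, and the remaining pairs contribute minus the sum of the traces of `A` over the slots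
`(i, j)`, multiplied by `δ`. Up to the factor `k p`, that sum is the (anti)symmetrization of the
single term in which both slots are the first.
-/

open Equiv (Perm swap)

section Symmetrization

variable {α β ι κ R K M : Type*} [Fintype α] [DecidableEq α] [Fintype β] [DecidableEq β]

/-- `T` is totally antisymmetric in its lower indices, which sit in the slots `α`, and totally
symmetric in its upper indices, which sit in the slots `β`. -/
def IsAltSymm [Ring R] (T : (α → ι) → (β → κ) → R) : Prop :=
  ∀ (π : Perm α) (τ : Perm β) (μ : α → ι) (ν : β → κ),
    T (μ ∘ π) (ν ∘ τ) = ((Perm.sign π : ℤ) : R) * T μ ν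

/-- The weight-one antisymmetrization of `T` over all its lower indices and symmetrization over
all its upper indices, written `T_{[μ_1…μ_p]}^{(ν_1…ν_k)}` in index notation. -/
def altSymm [Field K] (T : (α → ι) → (β → κ) → K) (μ : α → ι) (ν : β → κ) : K :=
  (∑ π : Perm α, ∑ τ : Perm β, ((Perm.sign π : ℤ) : K) * T (μ ∘ π) (ν ∘ τ)) /
    (((Fintype.card α).factorial : K) * ((Fintype.card β).factorial : K))

theorem intCast_sign_mul_self [Ring R] (π : Perm α) :
    ((Perm.sign π : ℤ) : R) * ((Perm.sign π : ℤ) : R) = 1 := by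
  rw [← Int.cast_mul, Int.units_coe_mul_self, Int.cast_one]

theorem card_nsmul_sum_perm_apply [AddCommMonoid M] (a : α) (f : α → M) :
    Fintype.card α • ∑ π : Perm α, f (π a) = (Fintype.card α).factorial • ∑ i, f i := by
  have slot_irrelevant (b : α) : ∑ π : Perm α, f (π b) = ∑ π : Perm α, f (π a) := by
    rw [← Equiv.sum_comp (Equiv.mulRight (swap a b))]
    simp
  calc
    Fintype.card α • ∑ π : Perm α, f (π a)
      = ∑ b, ∑ π : Perm α, f (π b) := by
        rw [Fintype.sum_congr _ _ slot_irrelevant, Finset.sum_const, Finset.card_univ]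
    _ = ∑ π : Perm α, ∑ b, f (π b) := Finset.sum_comm
    _ = (Fintype.card α).factorial • ∑ i, f i := by
        rw [Fintype.sum_congr _ _ fun π : Perm α => Equiv.sum_comp π f, Finset.sum_const,
          Finset.card_univ, Fintype.card_perm]

theorem card_nsmul_card_nsmul_sum_perm_apply [AddCommMonoid M] (a : α) (b : β) (f : α → β → M) :
    Fintype.card α • Fintype.card β • ∑ π : Perm α, ∑ τ : Perm β, f (π a) (τ b) =
      (Fintype.card α).factorial • (Fintype.card β).factorial • ∑ i, ∑ j, f i j := by
  rw [smul_comm, card_nsmul_sum_perm_apply a fun i => ∑ τ : Perm β, f i (τ b), smul_comm]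
  congr 1
  rw [Finset.smul_sum, Finset.smul_sum]
  exact Fintype.sum_congr _ _ fun i => card_nsmul_sum_perm_apply b (f i)

theorem card_mul_card_mul_altSymm [Field K] [CharZero K] {T : (α → ι) → (β → κ) → K}
    {μ : α → ι} {ν : β → κ} {F : α → β → K} (a : α) (b : β)
    (hT : ∀ (π : Perm α) (τ : Perm β),
      T (μ ∘ π) (ν ∘ τ) = ((Perm.sign π : ℤ) : K) * F (π a) (τ b)) :
    (Fintype.card α : K) * Fintype.card β * altSymm T μ ν = ∑ i, ∑ j, F i j := by
  have sum_eq := card_nsmul_card_nsmul_sum_perm_apply a b F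
  have factorials_ne_zero :
      ((Fintype.card α).factorial : K) * ((Fintype.card β).factorial : K) ≠ 0 :=
    mul_ne_zero (Nat.cast_ne_zero.2 (Nat.factorial_ne_zero _))
      (Nat.cast_ne_zero.2 (Nat.factorial_ne_zero _))
  simp only [nsmul_eq_mul, ← mul_assoc] at sum_eq
  simp only [altSymm, hT, ← mul_assoc, intCast_sign_mul_self, one_mul]
  rw [← mul_div_assoc, sum_eq, mul_div_cancel_left₀ _ factorials_ne_zero]

end Symmetrization

section Trace

variable {α β ι R K : Type*} [DecidableEq α] [DecidableEq β] [Fintype ι] [DecidableEq ι]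

/-- The trace of `A` over its lower slot `i` and upper slot `j`, with a Kronecker delta put back
into these two slots; for the first slots it is
`δ_{μ_1}^{ν_1} ∑_γ A_{γ μ_2…μ_p}^{γ ν_2…ν_k}`. -/
def deltaTrace [Ring R] (A : (α → ι) → (β → ι) → R) (i : α) (j : β) (μ : α → ι) (ν : β → ι) : R :=
  (if μ i = ν j then 1 else 0) * ∑ γ, A (Function.update μ i γ) (Function.update ν j γ)

theorem update_comp_perm {X : Type*} (μ : α → X) (π : Perm α) (i : α) (x : X) :
    Function.update (μ ∘ π) i x = Function.update μ (π i) x ∘ π := by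
  rw [Function.update_comp_equiv, Equiv.symm_apply_apply]

theorem IsAltSymm.deltaTrace_comp [Fintype α] [CommRing R]
    {A : (α → ι) → (β → ι) → R} (hA : IsAltSymm A) (i : α) (j : β) (π : Perm α) (τ : Perm β)
    (μ : α → ι) (ν : β → ι) :
    deltaTrace A i j (μ ∘ π) (ν ∘ τ) =
      ((Perm.sign π : ℤ) : R) * deltaTrace A (π i) (τ j) μ ν := by
  simp only [deltaTrace, update_comp_perm, hA π τ, Function.comp_apply, ← Finset.mul_sum,
    mul_left_comm]

theorem IsAltSymm.card_mul_card_mul_altSymm_deltaTrace [Fintype α] [Fintype β] [Field K]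
    [CharZero K] {A : (α → ι) → (β → ι) → K} (hA : IsAltSymm A) (a : α) (b : β)
    (μ : α → ι) (ν : β → ι) :
    (Fintype.card α : K) * Fintype.card β * altSymm (deltaTrace A a b) μ ν =
      ∑ i, ∑ j, deltaTrace A i j μ ν :=
  card_mul_card_mul_altSymm a b fun π τ => hA.deltaTrace_comp a b π τ μ ν

end Trace

section TensorDelta

variable {ι R K : Type*} [DecidableEq ι] {p k : ℕ}

/-- The tensor `A_{μ_1…μ_p}^{ν_1…ν_k} δ_γ^δ`, where `γ` and `δ` are the last entries of the two
extended index tuples. -/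
def tensorDelta [Ring R] (A : (Fin p → ι) → (Fin k → ι) → R)
    (μ : Fin (p + 1) → ι) (ν : Fin (k + 1) → ι) : R :=
  A (Fin.init μ) (Fin.init ν) * if μ (Fin.last p) = ν (Fin.last k) then 1 else 0

theorem init_comp_swap_last {X : Type*} (μ : Fin (p + 1) → X) (i : Fin p) :
    Fin.init (μ ∘ swap i.castSucc (Fin.last p)) =
      Function.update (Fin.init μ) i (μ (Fin.last p)) := by
  funext t
  obtain rfl | hti := eq_or_ne t i
  · simp [Fin.init]
  · have : t.castSucc ≠ i.castSucc := (Fin.castSucc_injective p).ne hti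
    simp [Fin.init, Equiv.swap_apply_of_ne_of_ne this (Fin.castSucc_ne_last t), hti]

theorem exists_perm_castSucc (π : Perm (Fin (p + 1))) :
    ∃ ρ : Perm (Fin p),
      Perm.sign ρ = Perm.sign π * Perm.sign (swap (π (Fin.last p)) (Fin.last p)) ∧
      ∀ i, π i.castSucc = swap (π (Fin.last p)) (Fin.last p) (ρ i).castSucc := by
  set e := finSuccEquivLast (n := p)
  set σ : Perm (Option (Fin p)) := e.permCongr (swap (π (Fin.last p)) (Fin.last p) * π) with hσ
  have σ_none : σ none = none := by simp [σ, e]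
  have σ_eq : (Equiv.removeNone σ).optionCongr = σ := by
    rw [map_equiv_removeNone, σ_none, Equiv.swap_self]
    rfl
  refine ⟨Equiv.removeNone σ, ?_, fun i => ?_⟩
  · rw [← Equiv.optionCongr_sign (Equiv.removeNone σ), σ_eq, hσ, Perm.sign_permCongr,
      Perm.sign_mul, mul_comm]
  · have σ_some : σ (some i) = some (Equiv.removeNone σ i) :=
      (DFunLike.congr_fun σ_eq (some i)).symm
    rw [← finSuccEquivLast_symm_some (Equiv.removeNone σ i), ← σ_some]
    simp [σ, e]

theorem IsAltSymm.tensorDelta_comp [Ring R] {A : (Fin p → ι) → (Fin k → ι) → R}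
    (hA : IsAltSymm A) (π : Perm (Fin (p + 1))) (τ : Perm (Fin (k + 1)))
    (μ : Fin (p + 1) → ι) (ν : Fin (k + 1) → ι) :
    tensorDelta A (μ ∘ π) (ν ∘ τ) = ((Perm.sign π : ℤ) : R) *
      (((Perm.sign (swap (π (Fin.last p)) (Fin.last p)) : ℤ) : R) *
        tensorDelta A (μ ∘ swap (π (Fin.last p)) (Fin.last p))
          (ν ∘ swap (τ (Fin.last k)) (Fin.last k))) := by
  obtain ⟨ρ, sign_ρ, hρ⟩ := exists_perm_castSucc π
  obtain ⟨σ, -, hσ⟩ := exists_perm_castSucc τ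
  have init_μ : Fin.init (μ ∘ π) =
      Fin.init (μ ∘ swap (π (Fin.last p)) (Fin.last p)) ∘ ρ :=
    funext fun i => congrArg μ (hρ i)
  have init_ν : Fin.init (ν ∘ τ) =
      Fin.init (ν ∘ swap (τ (Fin.last k)) (Fin.last k)) ∘ σ :=
    funext fun j => congrArg ν (hσ j)
  simp only [tensorDelta, init_μ, init_ν, hA ρ σ, Function.comp_apply, Equiv.swap_apply_right]
  rw [sign_ρ, Units.val_mul, Int.cast_mul, mul_assoc, mul_assoc]

theorem IsAltSymm.sum_sign_mul_tensorDelta_eq_zero [Field K] [CharZero K]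
    {A : (Fin p → ι) → (Fin k → ι) → K} (hA : IsAltSymm A)
    {μ : Fin (p + 1) → ι} {ν : Fin (k + 1) → ι} (hvanish : altSymm (tensorDelta A) μ ν = 0) :
    ∑ i, ∑ j, ((Perm.sign (swap i (Fin.last p)) : ℤ) : K) *
      tensorDelta A (μ ∘ swap i (Fin.last p)) (ν ∘ swap j (Fin.last k)) = 0 := by
  rw [← card_mul_card_mul_altSymm (Fin.last p) (Fin.last k)
    fun π τ => hA.tensorDelta_comp π τ μ ν, hvanish, mul_zero]

theorem sum_sign_mul_tensorDelta_snoc [Fintype ι] [CommRing R]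
    (A : (Fin p → ι) → (Fin k → ι) → R) (μ : Fin p → ι) (ν : Fin k → ι) :
    ∑ γ, ∑ i, ∑ j, ((Perm.sign (swap i (Fin.last p)) : ℤ) : R) *
        tensorDelta A (Fin.snoc μ γ ∘ swap i (Fin.last p)) (Fin.snoc ν γ ∘ swap j (Fin.last k)) =
      (Fintype.card ι + k - p) * A μ ν - ∑ i, ∑ j, deltaTrace A i j μ ν := by
  have both_extra : ∑ γ : ι, tensorDelta A (Fin.snoc μ γ) (Fin.snoc ν γ) =
      Fintype.card ι * A μ ν := by
    simp [tensorDelta]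
  have lower_extra : ∑ γ : ι, ∑ j : Fin k, tensorDelta A (Fin.snoc μ γ)
      (Fin.snoc ν γ ∘ swap j.castSucc (Fin.last k)) = k * A μ ν := by
    rw [Finset.sum_comm]
    simp [tensorDelta, init_comp_swap_last]
  have upper_extra : ∑ γ : ι, ∑ i : Fin p, tensorDelta A
      (Fin.snoc μ γ ∘ swap i.castSucc (Fin.last p)) (Fin.snoc ν γ) = p * A μ ν := by
    rw [Finset.sum_comm]
    simp [tensorDelta, init_comp_swap_last]
  have neither_extra : ∑ γ : ι, ∑ i : Fin p, ∑ j : Fin k, tensorDelta A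
      (Fin.snoc μ γ ∘ swap i.castSucc (Fin.last p))
      (Fin.snoc ν γ ∘ swap j.castSucc (Fin.last k)) = ∑ i, ∑ j, deltaTrace A i j μ ν := by
    rw [Finset.sum_comm]
    refine Fintype.sum_congr _ _ fun i => ?_
    rw [Finset.sum_comm]
    simp [tensorDelta, deltaTrace, init_comp_swap_last, Finset.sum_ite_irrel]
  have sign_swap (i : Fin p) : Perm.sign (swap i.castSucc (Fin.last p)) = -1 :=
    Perm.sign_swap (Fin.castSucc_ne_last i)
  simp only [Fin.sum_univ_castSucc, sign_swap, Equiv.swap_self, Perm.sign_refl, Equiv.coe_refl,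
    Function.comp_id, Units.val_neg, Units.val_one, Int.cast_neg, Int.cast_one, neg_mul, one_mul,
    Finset.sum_add_distrib, Finset.sum_neg_distrib, both_extra, lower_extra, upper_extra,
    neither_extra]
  ring

theorem IsAltSymm.mul_eq_sum_deltaTrace [Fintype ι] [Field K] [CharZero K]
    {A : (Fin p → ι) → (Fin k → ι) → K} (hA : IsAltSymm A)
    (hvanish : ∀ μ ν, altSymm (tensorDelta A) μ ν = 0) (μ : Fin p → ι) (ν : Fin k → ι) :
    (Fintype.card ι + k - p) * A μ ν = ∑ i, ∑ j, deltaTrace A i j μ ν := by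
  rw [← sub_eq_zero, ← sum_sign_mul_tensorDelta_snoc]
  exact Finset.sum_eq_zero fun γ _ => hA.sum_sign_mul_tensorDelta_eq_zero (hvanish _ _)

theorem contracted_antisymmetrization_identity_general [Fintype ι] [Field K] [CharZero K]
    (hp : 1 ≤ p) {A : (Fin p → ι) → (Fin k → ι) → K} (hA : IsAltSymm A)
    (hvanish : ∀ μ ν, altSymm (tensorDelta A) μ ν = 0) :
    (∀ μ ν, (Fintype.card ι + k - p) * A μ ν =
      k * p * altSymm
        (fun μ ν => if hk : 0 < k then deltaTrace A ⟨0, hp⟩ ⟨0, hk⟩ μ ν else 0) μ ν) ∧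
    (k = 0 → p < Fintype.card ι → ∀ μ ν, A μ ν = 0) := by
  constructor
  · intro μ ν
    rw [hA.mul_eq_sum_deltaTrace hvanish]
    obtain rfl | hk := k.eq_zero_or_pos
    · simp
    · have slot_sum := hA.card_mul_card_mul_altSymm_deltaTrace ⟨0, hp⟩ ⟨0, hk⟩ μ ν
      simp only [Fintype.card_fin] at slot_sum
      simp only [hk, dif_pos, mul_comm (k : K), slot_sum]
  · rintro rfl hlt μ ν
    have product_eq_zero := hA.mul_eq_sum_deltaTrace hvanish μ ν
    simp only [Finset.univ_eq_empty, Finset.sum_empty, Finset.sum_const_zero, Nat.cast_zero,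
      add_zero] at product_eq_zero
    exact (mul_eq_zero.1 product_eq_zero).resolve_left
      (sub_ne_zero.2 (Nat.cast_injective.ne hlt.ne'))

end TensorDelta

/-- the contracted tensor identity from the proof of the Algebraic
Poincaré Lemma. `A` is antisymmetric in its `p` lower indices and symmetric in its
`k` upper indices; if the weight-one antisymmetrization over the `p+1` lower indices
and symmetrization over the `k+1` upper indices of `A_{μ_1…μ_p}{}^{ν_1…ν_k} δ_γ{}^δ`
vanishes, then `(n+k-p)·A = k·p·S`, with `S` the (anti)symmetrization of
`δ_{μ_1}{}^{ν_1} Σ_γ A_{γ μ_2…μ_p}{}^{γ ν_2…ν_k}`; in particular `A = 0` when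
`k = 0` and `p < n`. -/
theorem contracted_antisymmetrization_identity
    (n p k : ℕ) (hn : 1 ≤ n) (hp : 1 ≤ p) (hpn : p ≤ n)
    (A : (Fin p → Fin n) → (Fin k → Fin n) → ℝ)
    (hanti : ∀ (μ : Fin p → Fin n) (ν : Fin k → Fin n) (π : Equiv.Perm (Fin p)),
      A (μ ∘ π) ν = ((Equiv.Perm.sign π : ℤ) : ℝ) * A μ ν)
    (hsym : ∀ (μ : Fin p → Fin n) (ν : Fin k → Fin n) (τ : Equiv.Perm (Fin k)),
      A μ (ν ∘ τ) = A μ ν)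
    (hvanish : ∀ (μ' : Fin (p + 1) → Fin n) (ν' : Fin (k + 1) → Fin n),
      (∑ π : Equiv.Perm (Fin (p + 1)), ∑ τ : Equiv.Perm (Fin (k + 1)),
          ((Equiv.Perm.sign π : ℤ) : ℝ) *
            (A (fun i : Fin p => (μ' ∘ π) i.castSucc) (fun j : Fin k => (ν' ∘ τ) j.castSucc) *
              (if (μ' ∘ π) (Fin.last p) = (ν' ∘ τ) (Fin.last k) then (1 : ℝ) else 0)))
        / ((Nat.factorial (p + 1) : ℝ) * (Nat.factorial (k + 1) : ℝ)) = 0) :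
    (∀ (μ : Fin p → Fin n) (ν : Fin k → Fin n),
      ((n : ℝ) + (k : ℝ) - (p : ℝ)) * A μ ν
        = (k : ℝ) * (p : ℝ) *
            ((∑ π : Equiv.Perm (Fin p), ∑ τ : Equiv.Perm (Fin k),
                ((Equiv.Perm.sign π : ℤ) : ℝ) *
                  (if hk : 0 < k then
                    (if (μ ∘ π) ⟨0, hp⟩ = (ν ∘ τ) ⟨0, hk⟩ then (1 : ℝ) else 0) *
                      ∑ γ : Fin n,
                        A (Function.update (μ ∘ π) ⟨0, hp⟩ γ)
                          (Function.update (ν ∘ τ) ⟨0, hk⟩ γ)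
                   else 0))
              / ((Nat.factorial p : ℝ) * (Nat.factorial k : ℝ)))) ∧
    (k = 0 → p < n → ∀ (μ : Fin p → Fin n) (ν : Fin k → Fin n), A μ ν = 0) := by
  simpa only [altSymm, deltaTrace, Fintype.card_fin] using
    contracted_antisymmetrization_identity_general hp (A := A)
      (fun π τ μ ν => by rw [hsym, hanti])
      (by simpa only [altSymm, Fintype.card_fin] using! hvanish)
end

section
/- Let n ≥ 2, let p with 1 ≤ p < n, and let k ≥ 0. For each i with 0 ≤ i ≤ k let A^i be a smooth field on ℝ^n with real components A^i{}_{μ_1…μ_p}{}^{ν_1…ν_i} (indices in {1,…,n}), totally antisymmetric in μ_1,…,μ_p and totally symmetric in ν_1,…,ν_i. For Ψ ∈ C^∞(ℝ^n, ℝ) define the p-form α[Ψ] with components α[Ψ]_{μ_1…μ_p}(x) = Σ_{i=0}^k Σ_{ν's} A^i{}_{μ_1…μ_p}{}^{ν_1…ν_i}(x) ∂_{ν_1}⋯∂_{ν_i}Ψ(x). Suppose that α[Ψ] is closed for every Ψ, i.e. Σ_{j=0}^{p} (−1)^j ∂_{μ_j} α[Ψ]_{μ_0…\hat{μ_j}…μ_p}(x)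 = 0 for all Ψ, all x and all index choices μ_0,…,μ_p (hat denoting omission). Then there exist smooth fields B^i (0 ≤ i ≤ k) with components B^i{}_{μ_2…μ_p}{}^{ν_1…ν_i}, totally antisymmetric in the p−1 lower indices and totally symmetric in the upper indices, such that for every Ψ and every x, α[Ψ]_{μ_1…μ_p}(x) = Σ_{j=1}^{p} (−1)^{j−1} ∂_{μ_j} β[Ψ]_{μ_1…\hat{μ_j}…μ_p}(x), where β[Ψ]_{μ_2…μ_p}(x) = Σ_{i=0}^k Σ_{ν's} B^i{}_{μ_2…μ_p}{}^{ν_1…ν_i}(x) ∂_{ν_1}⋯∂_{ν_i}Ψ(x); that is, α[Ψ] = d(β[Ψ]) for every Ψ. -/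
/-!
Let `α` be a closed `p`-form, `0 < p < n`, with values in the linear differential operators of
order at most `N`. Contracting `α` with the commutators by the coordinates,
`h α = ∑ₐ [α(a, …), xₐ]`, gives a form of order at most `N - 1`, and
`h d + d h = E + (n - p)` with `E L = ∑ₐ ∂ₐ [L, xₐ]`. The operator `E` counts derivatives: it
acts as `N` on operators of order at most `N`, up to operators of lower order. Hence
`(N + n - p) α - d (h α) = N α - E α` is again closed and has lower order, so it is exact by
induction, and `N + n - p` is not zero because `p < n`.
-/

open Finset
open scoped ContDiff Manifold

namespace AlgebraicPoincare

section Antisymmetric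

variable {ι M M' : Type*} [AddCommGroup M] [AddCommGroup M'] {p : ℕ}

/-- Total antisymmetry of the components of an `M`-valued `p`-form. -/
def IsAntisymm (α : (Fin p → ι) → M) : Prop :=
  ∀ (μ : Fin p → ι) (π : Equiv.Perm (Fin p)), α (μ ∘ π) = (Equiv.Perm.sign π : ℤ) • α μ

theorem IsAntisymm.map {α : (Fin p → ι) → M} (hα : IsAntisymm α) {F : Type*} [FunLike F M M']
    [AddMonoidHomClass F M M'] (f : F) : IsAntisymm fun μ => f (α μ) := fun μ π => by
  simp only [hα μ π, map_zsmul]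

theorem IsAntisymm.add {α β : (Fin p → ι) → M} (hα : IsAntisymm α) (hβ : IsAntisymm β) :
    IsAntisymm (α + β) := fun μ π => by
  simp only [Pi.add_apply, hα μ π, hβ μ π, smul_add]

theorem IsAntisymm.const_smul {R : Type*} [Monoid R] [DistribMulAction R M]
    {α : (Fin p → ι) → M} (hα : IsAntisymm α) (c : R) : IsAntisymm (c • α) := fun μ π => by
  simp only [Pi.smul_apply, hα μ π, smul_comm c]

theorem IsAntisymm.apply_cons_succAbove {α : (Fin (p + 1) → ι) → M} (hα : IsAntisymm α)
    (μ : Fin (p + 1) → ι) (j : Fin (p + 1)) :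
    α (Fin.cons (μ j) (μ ∘ j.succAbove)) = (-1 : ℤ) ^ (j : ℕ) • α μ := by
  have hcycle : (Fin.cons (μ j) (μ ∘ j.succAbove) : Fin (p + 1) → ι) = μ ∘ j.cycleRange.symm :=
    Fin.cons_removeNth_eq_comp_cycleRange_symm μ j
  rw [hcycle, hα, Equiv.Perm.sign_symm, Fin.sign_cycleRange]
  simp

theorem cons_comp_perm (a : ι) (σ : Fin p → ι) (π : Equiv.Perm (Fin p)) :
    (Fin.cons a (σ ∘ π) : Fin (p + 1) → ι) =
      Fin.cons a σ ∘ Equiv.Perm.decomposeFin.symm (0, π) := by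
  funext m
  cases m using Fin.cases <;> simp

theorem IsAntisymm.comp_cons {α : (Fin (p + 1) → ι) → M} (hα : IsAntisymm α) (a : ι) :
    IsAntisymm fun σ : Fin p → ι => α (Fin.cons a σ) := fun σ π => by
  simp only [cons_comp_perm, hα (Fin.cons a σ), Equiv.Perm.decomposeFin.symm_sign, if_true, one_mul]

theorem IsAntisymm.sum {s : Finset ι} {α : ι → (Fin p → ι) → M}
    (hα : ∀ a ∈ s, IsAntisymm (α a)) : IsAntisymm fun μ => ∑ a ∈ s, α a μ := fun μ π => by
  rw [smul_sum]
  exact sum_congr rfl fun a ha => hα a ha μ π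

end Antisymmetric

theorem exists_linearMap_section {K V W : Type*} [DivisionRing K] [AddCommGroup V] [Module K V]
    [AddCommGroup W] [Module K W] (f : V →ₗ[K] W) : ∃ g : W →ₗ[K] V, ∀ v, f (g (f v)) = f v := by
  obtain ⟨h, hh⟩ := f.rangeRestrict.exists_rightInverse_of_surjective f.range_rangeRestrict
  obtain ⟨g, rfl⟩ := LinearMap.exists_extend h
  exact ⟨g, fun v => congr($(LinearMap.congr_fun hh (f.rangeRestrict v)).val)⟩

/-- Positions `x_a` and momenta `∂_a` in an associative algebra, subject to the Weyl relations
that a homotopy for `∂` needs. -/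
structure WeylPair (W ι : Type*) [Ring W] [DecidableEq ι] where
  coord : ι → W
  deriv : ι → W
  deriv_mul_coord_sub : ∀ a b, deriv a * coord b - coord b * deriv a = if a = b then 1 else 0
  deriv_commute : ∀ a b, Commute (deriv a) (deriv b)

namespace WeylPair

variable {W ι : Type*} [Ring W] [DecidableEq ι] (P : WeylPair W ι) {p : ℕ}

/-- The exterior derivative of a `W`-valued form, each `∂_a` acting by left multiplication. -/
def extDeriv : ((Fin p → ι) → W) →+ ((Fin (p + 1) → ι) → W) where
  toFun α μ := ∑ j : Fin (p + 1), (-1 : ℤ) ^ (j : ℕ) • (P.deriv (μ j) * α (μ ∘ j.succAbove))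
  map_zero' := by
    funext μ
    simp only [Pi.zero_apply, mul_zero, smul_zero, sum_const_zero]
  map_add' α β := by
    funext μ
    simp only [Pi.add_apply, mul_add, smul_add, sum_add_distrib]

theorem extDeriv_apply (α : (Fin p → ι) → W) (μ : Fin (p + 1) → ι) :
    P.extDeriv α μ =
      ∑ j : Fin (p + 1), (-1 : ℤ) ^ (j : ℕ) • (P.deriv (μ j) * α (μ ∘ j.succAbove)) :=
  rfl

theorem extDeriv_smul {R : Type*} [Monoid R] [DistribMulAction R W] [SMulCommClass R W W] (c : R)
    (α : (Fin p → ι) → W) : P.extDeriv (c • α) = c • P.extDeriv α := by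
  funext μ
  simp only [extDeriv_apply, Pi.smul_apply, mul_smul_comm, smul_sum, smul_comm c]

theorem extDeriv_cons (α : (Fin (p + 1) → ι) → W) (a : ι) (μ : Fin (p + 1) → ι) :
    P.extDeriv α (Fin.cons a μ) = P.deriv a * α μ - ∑ j : Fin (p + 1),
      (-1 : ℤ) ^ (j : ℕ) • (P.deriv (μ j) * α (Fin.cons a (μ ∘ j.succAbove))) := by
  have htail (j : Fin (p + 1)) : (Fin.cons a μ : Fin (p + 2) → ι) ∘ j.succ.succAbove =
      Fin.cons a (μ ∘ j.succAbove) := by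
    funext l
    cases l using Fin.cases <;> simp [Fin.succ_succAbove_succ]
  rw [extDeriv_apply, Fin.sum_univ_succ, sub_eq_add_neg, ← sum_neg_distrib]
  simp only [htail, Fin.cons_zero, Fin.cons_succ, Fin.val_zero, Fin.val_succ, pow_zero, one_smul,
    pow_succ, mul_neg_one, neg_smul]
  rfl

/-- The commutator `L ↦ [L, xₐ]`, which on differential operators lowers the order. -/
def commCoord (a : ι) : W →+ W :=
  AddMonoidHom.mulRight (P.coord a) - AddMonoidHom.mulLeft (P.coord a)

theorem commCoord_apply (a : ι) (L : W) : P.commCoord a L = L * P.coord a - P.coord a * L :=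
  rfl

theorem commCoord_one (a : ι) : P.commCoord a 1 = 0 := by
  simp [commCoord_apply]

theorem commCoord_deriv_mul (a b : ι) (L : W) :
    P.commCoord a (P.deriv b * L) = P.deriv b * P.commCoord a L + if b = a then L else 0 := by
  have hweyl : (P.deriv b * P.coord a - P.coord a * P.deriv b) * L = if b = a then L else 0 := by
    rw [P.deriv_mul_coord_sub, ite_mul, one_mul, zero_mul]
  rw [← hweyl, commCoord_apply, commCoord_apply]
  noncomm_ring

/-- The iterated derivative `∂_{a₁} ⋯ ∂_{aₘ}` along the list `a₁, …, aₘ`. -/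
def iterDeriv (l : List ι) : W :=
  (l.map P.deriv).prod

theorem iterDeriv_cons (a : ι) (l : List ι) :
    P.iterDeriv (a :: l) = P.deriv a * P.iterDeriv l :=
  List.prod_cons

theorem iterDeriv_perm {l l' : List ι} (h : l.Perm l') : P.iterDeriv l = P.iterDeriv l' :=
  (h.map P.deriv).prod_eq' <| List.pairwise_map.mpr <| List.pairwise_of_forall P.deriv_commute

variable [Fintype ι]

/-- The homotopy operator: contract the first index of a form with the commutators by the
coordinates. -/
def contract : ((Fin (p + 1) → ι) → W) →+ ((Fin p → ι) → W) :=
  AddMonoidHom.pi fun σ =>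
    ∑ a, (P.commCoord a).comp (Pi.evalAddMonoidHom (fun _ => W) (Fin.cons a σ))

/-- The Euler operator `L ↦ ∑ₐ ∂ₐ [L, xₐ]`, whose eigenvalue on a product of `m` of the `∂ₐ`
is `m`. -/
def euler : W →+ W :=
  ∑ a, (AddMonoidHom.mulLeft (P.deriv a)).comp (P.commCoord a)

theorem contract_apply (α : (Fin (p + 1) → ι) → W) (σ : Fin p → ι) :
    P.contract α σ = ∑ a, P.commCoord a (α (Fin.cons a σ)) := by
  simp [contract]

theorem euler_apply (L : W) : P.euler L = ∑ a, P.deriv a * P.commCoord a L := by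
  simp [euler]

theorem euler_one : P.euler 1 = 0 := by
  simp [euler_apply, commCoord_one]

theorem euler_deriv_mul (b : ι) (L : W) :
    P.euler (P.deriv b * L) = P.deriv b * P.euler L + P.deriv b * L := by
  simp only [euler_apply, commCoord_deriv_mul, mul_add, mul_ite, mul_zero, sum_add_distrib,
    sum_ite_eq, mem_univ, if_true, mul_sum, ← mul_assoc, (P.deriv_commute b _).eq]

theorem euler_iterDeriv (l : List ι) : P.euler (P.iterDeriv l) = l.length • P.iterDeriv l := by
  induction l with
  | nil => simpa [iterDeriv] using P.euler_one
  | cons b l ih =>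
    rw [iterDeriv_cons, euler_deriv_mul, ih, List.length_cons, succ_nsmul, mul_smul_comm]

theorem isAntisymm_contract {α : (Fin (p + 1) → ι) → W} (hα : IsAntisymm α) :
    IsAntisymm (P.contract α) := by
  rw [funext (P.contract_apply α)]
  exact IsAntisymm.sum fun a _ => (hα.comp_cons a).map (P.commCoord a)

theorem extDeriv_euler (α : (Fin p → ι) → W) (μ : Fin (p + 1) → ι) :
    P.extDeriv (fun ν => P.euler (α ν)) μ = P.euler (P.extDeriv α μ) - P.extDeriv α μ := by
  simp only [extDeriv_apply, map_sum, map_zsmul, euler_deriv_mul, smul_add, sum_add_distrib,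
    add_sub_cancel_right]

-- The `∂ₐ` in `dα` fail to commute with `xₐ` in two places: the first index of
-- `dα (a, μ)` contributes `α μ` for every `a`, the others `-α μ` once for each index of `μ`.
theorem contract_extDeriv_add_extDeriv_contract {α : (Fin (p + 1) → ι) → W} (hα : IsAntisymm α)
    (μ : Fin (p + 1) → ι) :
    P.contract (P.extDeriv α) μ + P.extDeriv (P.contract α) μ =
      P.euler (α μ) + ((Fintype.card ι : ℤ) - (p + 1 : ℕ)) • α μ := by
  have hcancel (a : ι) (j : Fin (p + 1)) :
      (-1 : ℤ) ^ (j : ℕ) • (if μ j = a then α (Fin.cons a (μ ∘ j.succAbove)) else 0) =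
        if μ j = a then α μ else 0 := by
    split_ifs with h
    · rw [← h, hα.apply_cons_succAbove, smul_smul, ← mul_pow]
      simp
    · exact smul_zero _
  have hextDeriv : P.extDeriv (P.contract α) μ = ∑ a, ∑ j : Fin (p + 1), (-1 : ℤ) ^ (j : ℕ) •
      (P.deriv (μ j) * P.commCoord a (α (Fin.cons a (μ ∘ j.succAbove)))) := by
    rw [sum_comm]
    simp only [extDeriv_apply, contract_apply, mul_sum, smul_sum]
  rw [hextDeriv, contract_apply, euler_apply]
  simp only [extDeriv_cons, map_sub, map_sum, map_zsmul, commCoord_deriv_mul, if_true, smul_add,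
    hcancel, sum_sub_distrib, sum_add_distrib]
  rw [sum_comm (f := fun a j => if μ j = a then α μ else 0)]
  simp only [sum_const, sum_ite_eq, mem_univ, if_true, card_univ, Fintype.card_fin, sub_smul,
    natCast_zsmul]
  abel

theorem extDeriv_contract_of_closed {α : (Fin (p + 1) → ι) → W} (hα : IsAntisymm α)
    (hclosed : P.extDeriv α = 0) :
    P.extDeriv (P.contract α) =
      fun μ => P.euler (α μ) + ((Fintype.card ι : ℤ) - (p + 1 : ℕ)) • α μ := funext fun μ => by
  simpa [hclosed] using P.contract_extDeriv_add_extDeriv_contract hα μ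

theorem extDeriv_nsmul_sub_euler_of_closed (N : ℕ) {α : (Fin p → ι) → W}
    (hclosed : P.extDeriv α = 0) : P.extDeriv (fun μ => N • α μ - P.euler (α μ)) = 0 := by
  change P.extDeriv (N • α - fun μ => P.euler (α μ)) = 0
  rw [map_sub, map_nsmul, hclosed, nsmul_zero, zero_sub, neg_eq_zero]
  funext μ
  simp [extDeriv_euler, hclosed]

end WeylPair

/-- Coordinate functions on a commutative algebra together with the commuting partial derivatives
dual to them. -/
structure CoordinateSystem (K S ι : Type*) [CommRing K] [CommRing S] [Algebra K S]
    [DecidableEq ι] where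
  coord : ι → S
  pderiv : ι → Derivation K S S
  pderiv_coord : ∀ a b, pderiv a (coord b) = if a = b then 1 else 0
  pderiv_comm : ∀ a b f, pderiv a (pderiv b f) = pderiv b (pderiv a f)

namespace CoordinateSystem

section Order

variable {K S ι : Type*} [CommRing K] [CommRing S] [Algebra K S] [DecidableEq ι]
  (X : CoordinateSystem K S ι) {p N : ℕ}

/-- Multiplication by the coordinates and partial differentiation, as operators on `S`. -/
@[simps]
def toWeylPair : WeylPair (Module.End K S) ι where
  coord a := LinearMap.mulLeft K (X.coord a)
  deriv a := X.pderiv a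
  deriv_mul_coord_sub a b := by
    ext f
    split_ifs with h <;> simp [X.pderiv_coord, h]
  deriv_commute a b := LinearMap.ext (X.pderiv_comm a b)

theorem deriv_mul_smul (a : ι) (s : S) (L : Module.End K S) :
    X.toWeylPair.deriv a * (s • L) = s • (X.toWeylPair.deriv a * L) + X.pderiv a s • L := by
  ext f
  simp [mul_comm]

theorem commCoord_smul (a : ι) (s : S) (L : Module.End K S) :
    X.toWeylPair.commCoord a (s • L) = s • X.toWeylPair.commCoord a L := by
  ext f
  simp [WeylPair.commCoord_apply, mul_sub, mul_left_comm]

/-- The linear differential operators on `S` of order less than `N`. -/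
def diffOp (N : ℕ) : Submodule S (Module.End K S) :=
  Submodule.span S (X.toWeylPair.iterDeriv '' {l | l.length < N})

theorem iterDeriv_mem_diffOp {l : List ι} (hl : l.length < N) :
    X.toWeylPair.iterDeriv l ∈ X.diffOp N :=
  Submodule.subset_span ⟨l, hl, rfl⟩

theorem diffOp_zero : X.diffOp 0 = ⊥ := by
  simp [diffOp]

theorem diffOp_mono : Monotone X.diffOp := fun _ _ h =>
  Submodule.span_mono (Set.image_mono fun _ hl => lt_of_lt_of_le hl h)

theorem deriv_mul_mem_diffOp (a : ι) {L : Module.End K S} (hL : L ∈ X.diffOp N) :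
    X.toWeylPair.deriv a * L ∈ X.diffOp (N + 1) := by
  induction hL using Submodule.span_induction with
  | mem _ h =>
    obtain ⟨l, hl, rfl⟩ := h
    rw [← WeylPair.iterDeriv_cons]
    exact X.iterDeriv_mem_diffOp (Nat.succ_lt_succ hl)
  | zero => simp
  | add _ _ _ _ h₁ h₂ =>
    rw [mul_add]
    exact add_mem h₁ h₂
  | smul s L hL ih =>
    rw [deriv_mul_smul]
    exact add_mem (Submodule.smul_mem _ s ih)
      (Submodule.smul_mem _ _ (X.diffOp_mono N.le_succ hL))

theorem commCoord_iterDeriv_mem_diffOp (a : ι) (l : List ι) :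
    X.toWeylPair.commCoord a (X.toWeylPair.iterDeriv l) ∈ X.diffOp l.length := by
  induction l with
  | nil => simp [WeylPair.iterDeriv, WeylPair.commCoord_one]
  | cons b l ih =>
    rw [WeylPair.iterDeriv_cons, WeylPair.commCoord_deriv_mul]
    refine add_mem (X.deriv_mul_mem_diffOp b ih) ?_
    split_ifs
    · exact X.iterDeriv_mem_diffOp l.length.lt_succ_self
    · exact zero_mem _

theorem commCoord_mem_diffOp (a : ι) {L : Module.End K S} (hL : L ∈ X.diffOp (N + 1)) :
    X.toWeylPair.commCoord a L ∈ X.diffOp N := by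
  induction hL using Submodule.span_induction with
  | mem _ h =>
    obtain ⟨l, hl, rfl⟩ := h
    exact X.diffOp_mono (Nat.lt_succ_iff.mp hl) (X.commCoord_iterDeriv_mem_diffOp a l)
  | zero => simp
  | add _ _ _ _ h₁ h₂ =>
    rw [map_add]
    exact add_mem h₁ h₂
  | smul s L _ ih =>
    rw [commCoord_smul]
    exact Submodule.smul_mem _ s ih

variable [Fintype ι]

theorem euler_smul (s : S) (L : Module.End K S) :
    X.toWeylPair.euler (s • L) =
      s • X.toWeylPair.euler L + ∑ a, X.pderiv a s • X.toWeylPair.commCoord a L := by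
  simp only [WeylPair.euler_apply, commCoord_smul, deriv_mul_smul, sum_add_distrib, smul_sum]

theorem smul_sub_euler_mem_diffOp {L : Module.End K S} (hL : L ∈ X.diffOp (N + 1)) :
    N • L - X.toWeylPair.euler L ∈ X.diffOp N := by
  induction hL using Submodule.span_induction with
  | mem _ h =>
    obtain ⟨l, hl, rfl⟩ := h
    rw [WeylPair.euler_iterDeriv]
    obtain hlt | rfl := (Nat.lt_succ_iff.mp hl).lt_or_eq
    · exact sub_mem (nsmul_mem (X.iterDeriv_mem_diffOp hlt) _)
        (nsmul_mem (X.iterDeriv_mem_diffOp hlt) _)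
    · simp
  | zero => simp
  | add _ _ _ _ h₁ h₂ =>
    rw [nsmul_add, map_add, add_sub_add_comm]
    exact add_mem h₁ h₂
  | smul s L hL ih =>
    rw [euler_smul, ← sub_sub, smul_comm, ← smul_sub]
    exact sub_mem (Submodule.smul_mem _ s ih)
      (sum_mem fun a _ => Submodule.smul_mem _ _ (X.commCoord_mem_diffOp a hL))

theorem contract_mem_diffOp {α : (Fin (p + 1) → ι) → Module.End K S}
    (hα : ∀ μ, α μ ∈ X.diffOp (N + 1)) (σ : Fin p → ι) :
    X.toWeylPair.contract α σ ∈ X.diffOp N := by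
  rw [WeylPair.contract_apply]
  exact sum_mem fun a _ => X.commCoord_mem_diffOp a (hα _)

end Order

section Exactness

variable {K S ι : Type*} [Field K] [CharZero K] [CommRing S] [Algebra K S] [Fintype ι]
  [DecidableEq ι] (X : CoordinateSystem K S ι) {p : ℕ}

theorem exists_extDeriv_eq (hp : p + 1 < Fintype.card ι) (N : ℕ)
    {α : (Fin (p + 1) → ι) → Module.End K S} (hα : IsAntisymm α)
    (hord : ∀ μ, α μ ∈ X.diffOp N) (hclosed : X.toWeylPair.extDeriv α = 0) :
    ∃ β : (Fin p → ι) → Module.End K S,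
      IsAntisymm β ∧ (∀ σ, β σ ∈ X.diffOp N) ∧ X.toWeylPair.extDeriv β = α := by
  induction N generalizing α with
  | zero =>
    have hzero : α = 0 := funext fun μ => by simpa [X.diffOp_zero] using hord μ
    exact ⟨0, fun μ π => by simp, fun _ => zero_mem _, by rw [map_zero, hzero]⟩
  | succ N ih =>
    let P := X.toWeylPair
    have hlower : IsAntisymm fun μ => N • α μ - P.euler (α μ) :=
      hα.map (N • AddMonoidHom.id _ - P.euler)
    obtain ⟨β, hβanti, hβord, hβ⟩ := ih hlower
      (fun μ => X.smul_sub_euler_mem_diffOp (hord μ))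
      (P.extDeriv_nsmul_sub_euler_of_closed N hclosed)
    let c : ℤ := N + Fintype.card ι - (p + 1 : ℕ)
    have hc : (c : K) ≠ 0 := by
      simp only [c, ne_eq, Int.cast_eq_zero]
      omega
    have hhomotopy : P.extDeriv (P.contract α + β) = c • α := by
      rw [map_add, hβ, P.extDeriv_contract_of_closed hα hclosed]
      funext μ
      simp only [P, c, Pi.add_apply, Pi.smul_apply, sub_smul, add_smul, natCast_zsmul]
      abel
    refine ⟨(c : K)⁻¹ • (P.contract α + β), ?_, fun σ => ?_, ?_⟩
    · exact ((P.isAntisymm_contract hα).add hβanti).const_smul _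
    · have hmem : (P.contract α + β) σ ∈ X.diffOp (N + 1) :=
        X.diffOp_mono N.le_succ (add_mem (X.contract_mem_diffOp hord σ) (hβord σ))
      exact (X.diffOp (N + 1)).smul_of_tower_mem (c : K)⁻¹ hmem
    · rw [P.extDeriv_smul, hhomotopy, ← Int.cast_smul_eq_zsmul K, inv_smul_smul₀ hc]

end Exactness

section Coefficients

variable {K S ι : Type*} [CommRing K] [CommRing S] [Algebra K S] [DecidableEq ι] [Fintype ι]
  (X : CoordinateSystem K S ι) (N : ℕ)

/-- The differential operator `∑_{i < N} ∑_ν bⁱ_ν ∂_{ν₁} ⋯ ∂_{νᵢ}` with coefficients `b`. -/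
def ofCoeff : ((i : ℕ) → (Fin i → ι) → S) →ₗ[S] Module.End K S where
  toFun b := ∑ i ∈ range N, ∑ ν : Fin i → ι, b i ν • X.toWeylPair.iterDeriv (List.ofFn ν)
  map_add' _ _ := by simp only [Pi.add_apply, add_smul, sum_add_distrib]
  map_smul' _ _ := by simp only [Pi.smul_apply, smul_assoc, smul_sum, RingHom.id_apply]

theorem ofCoeff_apply (b : (i : ℕ) → (Fin i → ι) → S) :
    X.ofCoeff N b =
      ∑ i ∈ range N, ∑ ν : Fin i → ι, b i ν • X.toWeylPair.iterDeriv (List.ofFn ν) :=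
  rfl

theorem ofCoeff_mem_diffOp (b : (i : ℕ) → (Fin i → ι) → S) : X.ofCoeff N b ∈ X.diffOp N := by
  rw [ofCoeff_apply]
  refine sum_mem fun i hi => sum_mem fun ν _ => Submodule.smul_mem _ _ ?_
  exact X.iterDeriv_mem_diffOp (by simpa using hi)

/-- Coefficient families that are totally symmetric in their indices. -/
def symCoeff (S ι : Type*) [CommRing S] : Submodule S ((i : ℕ) → (Fin i → ι) → S) where
  carrier := {b | ∀ (i : ℕ) (ν : Fin i → ι) (τ : Equiv.Perm (Fin i)), b i (ν ∘ τ) = b i ν}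
  zero_mem' _ _ _ := rfl
  add_mem' ha hb i ν τ := congrArg₂ (· + ·) (ha i ν τ) (hb i ν τ)
  smul_mem' s _ hb i ν τ := congrArg (s • ·) (hb i ν τ)

end Coefficients

section Symmetrization

variable {K S ι : Type*} [Field K] [CharZero K] [CommRing S] [Algebra K S] [DecidableEq ι]
  [Fintype ι] (X : CoordinateSystem K S ι) (N : ℕ)

theorem iterDeriv_mem_map_symCoeff {l : List ι} (hl : l.length < N) :
    X.toWeylPair.iterDeriv l ∈ (symCoeff S ι).map (X.ofCoeff N) := by
  let b : (i : ℕ) → (Fin i → ι) → S := fun _ ν => if (List.ofFn ν).Perm l then 1 else 0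
  let m := ∑ i ∈ range N, #{ν : Fin i → ι | (List.ofFn ν).Perm l}
  have hb : b ∈ symCoeff S ι := fun i ν τ => by
    simp only [b, (τ.ofFn_comp_perm ν).congr_left]
  have hm : (m : K) ≠ 0 := by
    refine Nat.cast_ne_zero.mpr (sum_pos' (fun _ _ => zero_le) ⟨_, mem_range.mpr hl, ?_⟩).ne'
    exact card_pos.mpr ⟨l.get, by simp⟩
  have hsum : X.ofCoeff N b = (m : K) • X.toWeylPair.iterDeriv l := by
    have hterm (i : ℕ) (ν : Fin i → ι) : b i ν • X.toWeylPair.iterDeriv (List.ofFn ν) =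
        if (List.ofFn ν).Perm l then X.toWeylPair.iterDeriv l else 0 := by
      by_cases h : (List.ofFn ν).Perm l
      · simp [b, h, X.toWeylPair.iterDeriv_perm h]
      · simp [b, h]
    simp [ofCoeff_apply, hterm, ← sum_filter, m, sum_smul, Nat.cast_smul_eq_nsmul]
  rw [← inv_smul_smul₀ hm (X.toWeylPair.iterDeriv l), ← hsum]
  exact Submodule.smul_of_tower_mem _ _ (Submodule.mem_map_of_mem hb)

theorem diffOp_le_map_symCoeff : X.diffOp N ≤ (symCoeff S ι).map (X.ofCoeff N) := by
  rw [diffOp, Submodule.span_le]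
  rintro _ ⟨l, hl, rfl⟩
  exact X.iterDeriv_mem_map_symCoeff N hl

-- The choice of coefficients is `K`-linear so as to carry antisymmetry over to them.
theorem exists_symCoeff_section :
    ∃ c : Module.End K S →ₗ[K] symCoeff S ι, ∀ L ∈ X.diffOp N, X.ofCoeff N (c L) = L := by
  obtain ⟨c, hc⟩ := exists_linearMap_section
    (((X.ofCoeff N).domRestrict (symCoeff S ι)).restrictScalars K)
  refine ⟨c, fun L hL => ?_⟩
  obtain ⟨b, hb, rfl⟩ := X.diffOp_le_map_symCoeff N hL
  exact hc ⟨b, hb⟩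

theorem exists_ofCoeff_extDeriv_eq {p : ℕ} (hp : p + 1 < Fintype.card ι)
    {a : (Fin (p + 1) → ι) → (i : ℕ) → (Fin i → ι) → S} (ha : IsAntisymm a)
    (hclosed : X.toWeylPair.extDeriv (fun μ => X.ofCoeff N (a μ)) = 0) :
    ∃ b : (Fin p → ι) → (i : ℕ) → (Fin i → ι) → S, IsAntisymm b ∧ (∀ σ, b σ ∈ symCoeff S ι) ∧
      X.toWeylPair.extDeriv (fun σ => X.ofCoeff N (b σ)) = fun μ => X.ofCoeff N (a μ) := by
  obtain ⟨β, hβanti, hβord, hβ⟩ := X.exists_extDeriv_eq hp N (ha.map (X.ofCoeff N))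
    (fun μ => X.ofCoeff_mem_diffOp N (a μ)) hclosed
  obtain ⟨c, hc⟩ := X.exists_symCoeff_section N
  refine ⟨fun σ => c (β σ), (hβanti.map c).map (symCoeff S ι).subtype, fun σ => (c (β σ)).2, ?_⟩
  simpa only [hc _ (hβord _)] using hβ

end Symmetrization

end CoordinateSystem

section Smooth

/-- The algebra of smooth real functions on a normed space. -/
abbrev SmoothFun (E : Type*) [NormedAddCommGroup E] [NormedSpace ℝ E] : Type _ :=
  C^∞⟮𝓘(ℝ, E), E; 𝓘(ℝ, ℝ), ℝ⟯

namespace SmoothFun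

variable {E : Type*} [NormedAddCommGroup E] [NormedSpace ℝ E]

theorem contDiff (f : SmoothFun E) : ContDiff ℝ ∞ f :=
  f.contMDiff.contDiff

theorem differentiableAt (f : SmoothFun E) (x : E) : DifferentiableAt ℝ f x :=
  f.contDiff.differentiable (by simp) x

/-- Differentiation in the direction `v`. -/
noncomputable def dirDeriv (v : E) : Derivation ℝ (SmoothFun E) (SmoothFun E) :=
  Derivation.mk'
    { toFun f := ⟨fun x => fderiv ℝ f x v,
        ((f.contDiff.fderiv_right (by simp)).clm_apply contDiff_const).contMDiff⟩
      map_add' f g := by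
        ext x
        exact congr($(fderiv_add (f.differentiableAt x) (g.differentiableAt x)) v)
      map_smul' c f := by
        ext x
        exact congr($(fderiv_const_smul (f.differentiableAt x) c) v) }
    fun f g => by
      ext x
      exact congr($(fderiv_mul (f.differentiableAt x) (g.differentiableAt x)) v)

theorem dirDeriv_apply (v : E) (f : SmoothFun E) (x : E) : dirDeriv v f x = fderiv ℝ f x v :=
  rfl

theorem evalRingHom_apply (x : E) (f : SmoothFun E) : ContMDiffMap.evalRingHom x f = f x :=
  rfl

theorem dirDeriv_comm (v w : E) (f : SmoothFun E) :
    dirDeriv v (dirDeriv w f) = dirDeriv w (dirDeriv v f) := by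
  ext x
  have hdiff : DifferentiableAt ℝ (fderiv ℝ f) x :=
    (f.contDiff.fderiv_right (m := ∞) (by simp)).differentiable (by simp) x
  have hsymm : IsSymmSndFDerivAt ℝ f x := f.contDiff.contDiffAt.isSymmSndFDerivAt
    (by simpa using WithTop.coe_le_coe.2 (le_top : (2 : ℕ∞) ≤ ⊤))
  have happly (u : E) : fderiv ℝ (dirDeriv u f) x = (fderiv ℝ (fderiv ℝ f) x).flip u := by
    change fderiv ℝ (fun y => fderiv ℝ f y u) x = _
    rw [fderiv_clm_apply hdiff (by fun_prop)]
    simp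
  simpa only [dirDeriv_apply, happly, ContinuousLinearMap.flip_apply] using hsymm v w

theorem iteratedFDeriv_succ_apply (f : SmoothFun E) {i : ℕ} (v : Fin (i + 1) → E) (x : E) :
    iteratedFDeriv ℝ (i + 1) f x v =
      fderiv ℝ (fun y => iteratedFDeriv ℝ i f y (Fin.tail v)) x (v 0) := by
  have hdiff : DifferentiableAt ℝ (iteratedFDeriv ℝ i f) x :=
    (f.contDiff.iteratedFDeriv_right (m := ∞) (by exact_mod_cast le_top)).differentiable (by simp) x
  rw [iteratedFDeriv_succ_apply_left, fderiv_continuousMultilinear_apply_const_apply hdiff]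

theorem isAntisymm_iff {ι : Type*} {p : ℕ}
    {b : (Fin p → ι) → (i : ℕ) → (Fin i → ι) → SmoothFun E} :
    IsAntisymm b ↔ ∀ (σ : Fin p → ι) (π : Equiv.Perm (Fin p)) (i : ℕ) (ν : Fin i → ι) (x : E),
      b (σ ∘ π) i ν x = ((Equiv.Perm.sign π : ℤ) : ℝ) * b σ i ν x := by
  have happly (m : ℤ) (f : SmoothFun E) (x : E) : (m • f) x = m * f x := by
    rw [← evalRingHom_apply x, map_zsmul, zsmul_eq_mul, evalRingHom_apply]
  simp only [IsAntisymm, funext_iff, ContMDiffMap.ext_iff, Pi.smul_apply, happly]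

end SmoothFun

variable {ι : Type*} [Fintype ι] [DecidableEq ι]

/-- The standard coordinates of `ι → ℝ`, acting on smooth functions. -/
noncomputable def smoothCoordinates (ι : Type*) [Fintype ι] [DecidableEq ι] :
    CoordinateSystem ℝ (SmoothFun (ι → ℝ)) ι where
  coord a := ⟨fun x => x a, (contDiff_apply ℝ ℝ a).contMDiff⟩
  pderiv a := SmoothFun.dirDeriv (Pi.single a 1)
  pderiv_coord a b := by
    ext x
    have hproj : fderiv ℝ (fun y : ι → ℝ => y b) x = ContinuousLinearMap.proj b :=
      (ContinuousLinearMap.proj (R := ℝ) (φ := fun _ : ι => ℝ) b).fderiv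
    change fderiv ℝ (fun y : ι → ℝ => y b) x (Pi.single a 1) = _
    split_ifs with h <;> simp [hproj, h, eq_comm]
  pderiv_comm a b := SmoothFun.dirDeriv_comm (Pi.single a 1) (Pi.single b 1)

theorem iterDeriv_smoothCoordinates_apply {i : ℕ} (ν : Fin i → ι) (Ψ : SmoothFun (ι → ℝ))
    (x : ι → ℝ) :
    (smoothCoordinates ι).toWeylPair.iterDeriv (List.ofFn ν) Ψ x =
      iteratedFDeriv ℝ i Ψ x fun l => Pi.single (ν l) 1 := by
  induction i generalizing x with
  | zero => simp [WeylPair.iterDeriv]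
  | succ i ih =>
    rw [Ψ.iteratedFDeriv_succ_apply, List.ofFn_succ, WeylPair.iterDeriv_cons]
    exact congr(fderiv ℝ $(funext fun y => ih (Fin.tail ν) y) x (Pi.single (ν 0) 1))

theorem ofCoeff_smoothCoordinates_apply (N : ℕ) (b : (i : ℕ) → (Fin i → ι) → SmoothFun (ι → ℝ))
    (Ψ : SmoothFun (ι → ℝ)) (x : ι → ℝ) :
    (smoothCoordinates ι).ofCoeff N b Ψ x = ∑ i ∈ range N, ∑ ν : Fin i → ι,
      b i ν x * iteratedFDeriv ℝ i Ψ x fun l => Pi.single (ν l) 1 := by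
  simp only [CoordinateSystem.ofCoeff_apply, LinearMap.sum_apply, LinearMap.smul_apply, smul_eq_mul,
    ← SmoothFun.evalRingHom_apply x, map_sum, map_mul]
  simp only [SmoothFun.evalRingHom_apply, iterDeriv_smoothCoordinates_apply]

theorem extDeriv_ofCoeff_smoothCoordinates_apply {p : ℕ} (N : ℕ)
    (b : (Fin p → ι) → (i : ℕ) → (Fin i → ι) → SmoothFun (ι → ℝ)) (μ : Fin (p + 1) → ι)
    (Ψ : SmoothFun (ι → ℝ)) (x : ι → ℝ) :
    (smoothCoordinates ι).toWeylPair.extDeriv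
        (fun σ => (smoothCoordinates ι).ofCoeff N (b σ)) μ Ψ x =
      ∑ j : Fin (p + 1), (-1 : ℝ) ^ (j : ℕ) *
        fderiv ℝ (fun y => ∑ i ∈ range N, ∑ ν : Fin i → ι, b (μ ∘ j.succAbove) i ν y *
          iteratedFDeriv ℝ i Ψ y fun l => Pi.single (ν l) 1) x (Pi.single (μ j) 1) := by
  simp only [← ofCoeff_smoothCoordinates_apply]
  rw [WeylPair.extDeriv_apply, LinearMap.sum_apply, ← SmoothFun.evalRingHom_apply x, map_sum]
  refine sum_congr rfl fun j _ => ?_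
  rw [LinearMap.smul_apply, map_zsmul, zsmul_eq_mul, Int.cast_pow, Int.cast_neg, Int.cast_one]
  rfl

end Smooth

end AlgebraicPoincare

open AlgebraicPoincare in
theorem algebraic_poincare_lemma_linear_general
    {ι : Type*} [Fintype ι] [DecidableEq ι] (q k : ℕ) (hpn : q + 1 < Fintype.card ι)
    (A : (i : ℕ) → (Fin (q + 1) → ι) → (Fin i → ι) → (ι → ℝ) → ℝ)
    (hAsmooth : ∀ i ≤ k, ∀ (μ : Fin (q + 1) → ι) (ν : Fin i → ι),
      ContDiff ℝ (⊤ : ℕ∞) (A i μ ν))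
    (hAanti : ∀ i ≤ k, ∀ (μ : Fin (q + 1) → ι) (ν : Fin i → ι) (x : ι → ℝ)
      (π : Equiv.Perm (Fin (q + 1))),
      A i (μ ∘ π) ν x = ((Equiv.Perm.sign π : ℤ) : ℝ) * A i μ ν x)
    (hclosed : ∀ Ψ : (ι → ℝ) → ℝ, ContDiff ℝ (⊤ : ℕ∞) Ψ →
      ∀ (x : ι → ℝ) (μ : Fin (q + 2) → ι),
        ∑ j : Fin (q + 2), (-1 : ℝ) ^ (j : ℕ) *
          fderiv ℝ (fun y : ι → ℝ =>
              ∑ i ∈ Finset.range (k + 1), ∑ ν : Fin i → ι,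
                A i (μ ∘ j.succAbove) ν y *
                  iteratedFDeriv ℝ i Ψ y (fun l : Fin i => Pi.single (ν l) (1 : ℝ)))
            x (Pi.single (μ j) (1 : ℝ)) = 0) :
    ∃ B : (i : ℕ) → (Fin q → ι) → (Fin i → ι) → (ι → ℝ) → ℝ,
      (∀ i ≤ k, ∀ (σ : Fin q → ι) (ν : Fin i → ι),
        ContDiff ℝ (⊤ : ℕ∞) (B i σ ν)) ∧
      (∀ i ≤ k, ∀ (σ : Fin q → ι) (ν : Fin i → ι) (x : ι → ℝ)
        (π : Equiv.Perm (Fin q)),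
        B i (σ ∘ π) ν x = ((Equiv.Perm.sign π : ℤ) : ℝ) * B i σ ν x) ∧
      (∀ i ≤ k, ∀ (σ : Fin q → ι) (ν : Fin i → ι) (x : ι → ℝ)
        (τ : Equiv.Perm (Fin i)),
        B i σ (ν ∘ τ) x = B i σ ν x) ∧
      (∀ Ψ : (ι → ℝ) → ℝ, ContDiff ℝ (⊤ : ℕ∞) Ψ →
        ∀ (x : ι → ℝ) (μ : Fin (q + 1) → ι),
          (∑ i ∈ Finset.range (k + 1), ∑ ν : Fin i → ι,
              A i μ ν x * iteratedFDeriv ℝ i Ψ x (fun l : Fin i => Pi.single (ν l) (1 : ℝ)))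
            = ∑ j : Fin (q + 1), (-1 : ℝ) ^ (j : ℕ) *
                fderiv ℝ (fun y : ι → ℝ =>
                    ∑ i ∈ Finset.range (k + 1), ∑ ν : Fin i → ι,
                      B i (μ ∘ j.succAbove) ν y *
                        iteratedFDeriv ℝ i Ψ y (fun l : Fin i => Pi.single (ν l) (1 : ℝ)))
                  x (Pi.single (μ j) (1 : ℝ))) := by
  let X := smoothCoordinates ι
  let a : (Fin (q + 1) → ι) → (i : ℕ) → (Fin i → ι) → SmoothFun (ι → ℝ) := fun μ i ν =>
    if h : i ≤ k then ⟨A i μ ν, (hAsmooth i h μ ν).contMDiff⟩ else 0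
  have ha : IsAntisymm a := SmoothFun.isAntisymm_iff.mpr fun μ π i ν x => by
    by_cases h : i ≤ k
    · simpa [a, h] using hAanti i h μ ν x π
    · simp [a, h]
  have hsum (μ : Fin (q + 1) → ι) (Ψ : (ι → ℝ) → ℝ) (y : ι → ℝ) :
      ∑ i ∈ range (k + 1), ∑ ν : Fin i → ι,
          a μ i ν y * iteratedFDeriv ℝ i Ψ y (fun l => Pi.single (ν l) 1) =
        ∑ i ∈ range (k + 1), ∑ ν : Fin i → ι,
          A i μ ν y * iteratedFDeriv ℝ i Ψ y (fun l => Pi.single (ν l) 1) :=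
    sum_congr rfl fun i hi => by simp [a, Nat.lt_succ_iff.mp (mem_range.mp hi)]
  have haclosed : X.toWeylPair.extDeriv (fun μ => X.ofCoeff (k + 1) (a μ)) = 0 := by
    ext μ Ψ x
    rw [extDeriv_ofCoeff_smoothCoordinates_apply]
    simp only [hsum]
    exact hclosed Ψ Ψ.contDiff x μ
  obtain ⟨b, hbanti, hbsym, hb⟩ := X.exists_ofCoeff_extDeriv_eq (k + 1) hpn ha haclosed
  refine ⟨fun i σ ν => b σ i ν, fun i _ σ ν => (b σ i ν).contDiff,
    fun i _ σ ν x π => SmoothFun.isAntisymm_iff.mp hbanti σ π i ν x,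
    fun i _ σ ν x τ => congr($(hbsym σ i ν τ) x), fun Ψ hΨ x μ => ?_⟩
  obtain ⟨Ψ, rfl⟩ : ∃ f : SmoothFun (ι → ℝ), ⇑f = Ψ := ⟨⟨Ψ, hΨ.contMDiff⟩, rfl⟩
  rw [← hsum, ← ofCoeff_smoothCoordinates_apply, ← extDeriv_ofCoeff_smoothCoordinates_apply]
  exact congr($hb.symm μ Ψ x)

/-- the linear-in-the-field case of the Algebraic Poincaré Lemma on
`ℝ^n`. We write the form degree as `p = q + 1` (so `1 ≤ p < n`). If the `p`-form
`α[Ψ]_{μ_1…μ_p} = Σ_{i=0}^k A^i{}_{μ_1…μ_p}{}^{ν_1…ν_i} ∂_{ν_1}⋯∂_{ν_i}Ψ` is closed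
for every smooth `Ψ`, then there are smooth coefficient fields `B^i`, antisymmetric
in their `p-1` lower indices and symmetric in their upper indices, such that
`α[Ψ] = d(β[Ψ])` for every `Ψ`, where
`β[Ψ]_{μ_2…μ_p} = Σ_i B^i{}_{μ_2…μ_p}{}^{ν_1…ν_i} ∂_{ν_1}⋯∂_{ν_i}Ψ`. -/
theorem algebraic_poincare_lemma_linear
    (n q k : ℕ) (hn : 2 ≤ n) (hpn : q + 1 < n)
    (A : (i : ℕ) → (Fin (q + 1) → Fin n) → (Fin i → Fin n) → (Fin n → ℝ) → ℝ)
    (hAsmooth : ∀ i ≤ k, ∀ (μ : Fin (q + 1) → Fin n) (ν : Fin i → Fin n),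
      ContDiff ℝ (⊤ : ℕ∞) (A i μ ν))
    (hAanti : ∀ i ≤ k, ∀ (μ : Fin (q + 1) → Fin n) (ν : Fin i → Fin n) (x : Fin n → ℝ)
      (π : Equiv.Perm (Fin (q + 1))),
      A i (μ ∘ π) ν x = ((Equiv.Perm.sign π : ℤ) : ℝ) * A i μ ν x)
    (hAsym : ∀ i ≤ k, ∀ (μ : Fin (q + 1) → Fin n) (ν : Fin i → Fin n) (x : Fin n → ℝ)
      (τ : Equiv.Perm (Fin i)),
      A i μ (ν ∘ τ) x = A i μ ν x)
    (hclosed : ∀ Ψ : (Fin n → ℝ) → ℝ, ContDiff ℝ (⊤ : ℕ∞) Ψ →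
      ∀ (x : Fin n → ℝ) (μ : Fin (q + 2) → Fin n),
        ∑ j : Fin (q + 2), (-1 : ℝ) ^ (j : ℕ) *
          fderiv ℝ (fun y : Fin n → ℝ =>
              ∑ i ∈ Finset.range (k + 1), ∑ ν : Fin i → Fin n,
                A i (μ ∘ j.succAbove) ν y *
                  iteratedFDeriv ℝ i Ψ y (fun l : Fin i => Pi.single (ν l) (1 : ℝ)))
            x (Pi.single (μ j) (1 : ℝ)) = 0) :
    ∃ B : (i : ℕ) → (Fin q → Fin n) → (Fin i → Fin n) → (Fin n → ℝ) → ℝ,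
      (∀ i ≤ k, ∀ (σ : Fin q → Fin n) (ν : Fin i → Fin n),
        ContDiff ℝ (⊤ : ℕ∞) (B i σ ν)) ∧
      (∀ i ≤ k, ∀ (σ : Fin q → Fin n) (ν : Fin i → Fin n) (x : Fin n → ℝ)
        (π : Equiv.Perm (Fin q)),
        B i (σ ∘ π) ν x = ((Equiv.Perm.sign π : ℤ) : ℝ) * B i σ ν x) ∧
      (∀ i ≤ k, ∀ (σ : Fin q → Fin n) (ν : Fin i → Fin n) (x : Fin n → ℝ)
        (τ : Equiv.Perm (Fin i)),
        B i σ (ν ∘ τ) x = B i σ ν x) ∧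
      (∀ Ψ : (Fin n → ℝ) → ℝ, ContDiff ℝ (⊤ : ℕ∞) Ψ →
        ∀ (x : Fin n → ℝ) (μ : Fin (q + 1) → Fin n),
          (∑ i ∈ Finset.range (k + 1), ∑ ν : Fin i → Fin n,
              A i μ ν x * iteratedFDeriv ℝ i Ψ x (fun l : Fin i => Pi.single (ν l) (1 : ℝ)))
            = ∑ j : Fin (q + 1), (-1 : ℝ) ^ (j : ℕ) *
                fderiv ℝ (fun y : Fin n → ℝ =>
                    ∑ i ∈ Finset.range (k + 1), ∑ ν : Fin i → Fin n,
                      B i (μ ∘ j.succAbove) ν y *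
                        iteratedFDeriv ℝ i Ψ y (fun l : Fin i => Pi.single (ν l) (1 : ℝ)))
                  x (Pi.single (μ j) (1 : ℝ))) :=
  algebraic_poincare_lemma_linear_general q k (by simpa using hpn) A hAsmooth hAanti hclosed
end
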